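/- arXiv:1907.12243 — 2 statements merged into one kernel-verified Lean document; each statement's English description precedes it below -/
import Mathlib

section
/- If the discrete Sobolev inner product ⟨·,·⟩ is sequentially-ordered and μ belongs to the Nevai class M(0,1), then S_n(z)/P_n(z) converges, uniformly on every compact subset of ℂ̄ ∖ [−1,1], to ∏_{j=1}^{N} (φ(z) − φ(c_j))² / (2 φ(z) (z − c_j)) as n → ∞, where P_n are the monic orthogonal polynomials with respect to μ and φ(z) = z + √(z²−1) with √(z²−1) > 0 for z > 1. -/
open MeasureTheory Polynomial Filter
open scoped Classical

noncomputable section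

/-- The discrete Sobolev inner product with a single derivative order `d j` at each
mass point `c j`, with weight `η j`. -/
def sobInner (μ : Measure ℝ) {N : ℕ} (c : Fin N → ℝ) (d : Fin N → ℕ) (η : Fin N → ℝ)
    (f g : Polynomial ℝ) : ℝ :=
  (∫ x in Set.Icc (-1:ℝ) 1, f.eval x * g.eval x ∂μ) +
    ∑ j, η j * ((derivative^[d j] f).eval (c j)) * ((derivative^[d j] g).eval (c j))

/-- The general discrete Sobolev inner product with weights `η j i` for the `i`-th
derivatives, `0 ≤ i ≤ d j`, at each mass point `c j`. -/
def sobInner2 (μ : Measure ℝ) {N : ℕ} (c : Fin N → ℝ) (d : Fin N → ℕ) (η : Fin N → ℕ → ℝ)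
    (f g : Polynomial ℝ) : ℝ :=
  (∫ x in Set.Icc (-1:ℝ) 1, f.eval x * g.eval x ∂μ) +
    ∑ j, ∑ i ∈ Finset.range (d j + 1),
      η j i * ((derivative^[i] f).eval (c j)) * ((derivative^[i] g).eval (c j))

/-- Sequential order for the data of a discrete Sobolev inner product:
`d` is nondecreasing and each `c k` lies outside the convex hull of
`(-1,1) ∪ {c 1, …, c (k-1)}`. -/
def SeqOrdered {N : ℕ} (c : Fin N → ℝ) (d : Fin N → ℕ) : Prop :=
  (∀ i j : Fin N, i ≤ j → d i ≤ d j) ∧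
    ∀ k : Fin N, c k ∉ convexHull ℝ (Set.Ioo (-1:ℝ) 1 ∪ c '' {j : Fin N | j < k})

/-- The polynomial ρ(x) = ∏_{c j < -1} (x - c j)^(d j + 1) · ∏_{c j > 1} (c j - x)^(d j + 1). -/
def rhoPoly {N : ℕ} (c : Fin N → ℝ) (d : Fin N → ℕ) : Polynomial ℝ :=
  (∏ j ∈ Finset.univ.filter (fun j => c j < -1), (X - C (c j)) ^ (d j + 1)) *
    ∏ j ∈ Finset.univ.filter (fun j => (1:ℝ) < c j), (C (c j) - X) ^ (d j + 1)

/-- ν = number of mass points greater than 1. -/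
def nuCount {N : ℕ} (c : Fin N → ℝ) : ℕ :=
  (Finset.univ.filter (fun j : Fin N => (1:ℝ) < c j)).card

/-- μ belongs to the Nevai class M(0,1): supp μ = [-1,1] and the monic orthogonal
polynomials of μ satisfy a three-term recurrence with aₙ → 1/2 and bₙ → 0. -/
def NevaiClass (μ : Measure ℝ) : Prop :=
  μ (Set.Icc (-1:ℝ) 1)ᶜ = 0 ∧
  (∀ x ∈ Set.Icc (-1:ℝ) 1, ∀ ε > 0, 0 < μ (Metric.ball x ε)) ∧
  ∃ (P : ℕ → Polynomial ℝ) (a b : ℕ → ℝ),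
    (∀ n, (P n).Monic) ∧ (∀ n, (P n).natDegree = n) ∧
    (∀ n, ∀ m < n, (∫ x in Set.Icc (-1:ℝ) 1, x ^ m * (P n).eval x ∂μ) = 0) ∧
    P 0 = 1 ∧ P 1 = X - C (b 0) ∧
    (∀ n, P (n + 2) = (X - C (b (n + 1))) * P (n + 1) - C ((a (n + 1)) ^ 2) * P n) ∧
    Tendsto a atTop (nhds (1 / 2)) ∧ Tendsto b atTop (nhds 0)

/-- The segment [-1,1] regarded as a subset of ℂ. -/
def segIcc : Set ℂ := Complex.ofReal '' Set.Icc (-1:ℝ) 1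

/-- Markov-type function: z ↦ ∫ q(x) / (z - x) w(x) dμ(x). -/
def markovHat (μ : Measure ℝ) (w q : Polynomial ℝ) (z : ℂ) : ℂ :=
  ∫ x in Set.Icc (-1:ℝ) 1, ((q.eval x * w.eval x : ℝ) : ℂ) / (z - (x : ℂ)) ∂μ

/-- Associated function: z ↦ ∫ (p(z) - p(x)) / (z - x) · q(x) w(x) dμ(x). -/
def assocFun (μ : Measure ℝ) (w q p : Polynomial ℝ) (z : ℂ) : ℂ :=
  ∫ x in Set.Icc (-1:ℝ) 1,
    ((aeval z p - ((p.eval x : ℝ) : ℂ)) / (z - (x : ℂ))) * ((q.eval x * w.eval x : ℝ) : ℂ) ∂μ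

/-- A function changes sign at `t` if arbitrarily close to `t`, on the left and right,
it takes values of opposite signs. -/
def SignChangeAt (p : Polynomial ℝ) (t : ℝ) : Prop :=
  ∀ δ > 0, ∃ x ∈ Set.Ioo (t - δ) t, ∃ y ∈ Set.Ioo t (t + δ), p.eval x * p.eval y < 0

/-- N₀(f; A): number of zeros of `f` in `A`, counted with multiplicity. -/
def N0 (f : Polynomial ℝ) (A : Set ℝ) : ℕ :=
  (f.roots.filter (fun x => x ∈ A)).card

/-!
`S n` is `P n` minus a combination, one term per mass point, of the kernel sums
`∑ k < n, P k⁽ᵈ⁾(c) P k / h k`, with `h k` the squared norm of `P k`.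

Because the zeros of the `P n` lie in `[-1, 1]`, the ratios `P n / P (n + 1)` are locally bounded on
`ℂ ∖ [-1, 1]`. Off the real axis the recurrence is a perturbation of a Möbius map with attracting
fixed point `φ z / 2`, so the ratios converge to `2 / φ z` there, and by Vitali's theorem they do so
locally uniformly on `ℂ ∖ [-1, 1]`. The Gauss–Lucas estimate `p / p' = O(1 / deg p)` carries the
same limit over to the derivatives `P n⁽ᵈ⁾(c)`, which is why the orders `d` do not appear in the
answer.

A kernel sum divided by its first omitted term therefore behaves like a geometric series, with limit
`1 / (φ z * φ c - 1)`. Evaluating the correction formula at the mass points gives a linear system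
for the coefficients, whose matrix converges to the invertible Cauchy-type matrix
`1 / (φ (c i) * φ (c j) - 1)`. The limit of `S n / P n` is thus a rational function of `φ z` with
value `1` at infinity, zeros at `φ (c j)` and simple poles at `1 / φ (c j)`, which determines it.
-/

theorem mem_segIcc {z : ℂ} : z ∈ segIcc ↔ z.im = 0 ∧ z.re ∈ Set.Icc (-1 : ℝ) 1 := by
  constructor
  · rintro ⟨x, hx, rfl⟩
    exact ⟨Complex.ofReal_im x, hx⟩
  · rintro ⟨him, hre⟩
    exact ⟨z.re, hre, Complex.ext rfl him.symm⟩

theorem ofReal_mem_segIcc {x : ℝ} : (x : ℂ) ∈ segIcc ↔ x ∈ Set.Icc (-1 : ℝ) 1 :=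
  Complex.ofReal_injective.mem_set_image

theorem isCompact_segIcc : IsCompact segIcc :=
  isCompact_Icc.image Complex.continuous_ofReal

theorem isOpen_compl_segIcc : IsOpen segIccᶜ :=
  isCompact_segIcc.isClosed.isOpen_compl

theorem convex_segIcc : Convex ℝ segIcc :=
  (convex_Icc (-1 : ℝ) 1).linear_image Complex.ofRealCLM.toLinearMap

theorem segIcc_nonempty : segIcc.Nonempty :=
  ⟨_, 0, by norm_num, rfl⟩

theorem infDist_segIcc_pos {z : ℂ} (hz : z ∉ segIcc) : 0 < Metric.infDist z segIcc :=
  (isCompact_segIcc.isClosed.notMem_iff_infDist_pos segIcc_nonempty).1 hz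

/-- `P n` is a monic polynomial of degree `n` with `L (X ^ m * P n) = 0` for all `m < n`: the
monic orthogonal polynomials of the moment functional `L`. -/
structure IsMonicOrthogonal {R : Type*} [CommRing R] (L : R[X] →ₗ[R] R) (P : ℕ → R[X]) : Prop where
  monic : ∀ n, (P n).Monic
  natDegree_eq : ∀ n, (P n).natDegree = n
  orthogonal : ∀ n, ∀ m < n, L (X ^ m * P n) = 0

/-- `P 1 = X - b 0` and `P (n + 2) = (X - b (n + 1)) P (n + 1) - a (n + 1) ^ 2 P n`; the values
`P 0` and `a 0` are not constrained. -/
structure ThreeTermRecurrence {R : Type*} [CommRing R] (P : ℕ → R[X]) (a b : ℕ → R) : Prop where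
  one_eq : P 1 = X - C (b 0)
  succ_succ_eq : ∀ n, P (n + 2) = (X - C (b (n + 1))) * P (n + 1) - C (a (n + 1) ^ 2) * P n

/-- Monic orthogonal polynomials, with their recurrence coefficients, of a positive definite moment
functional `L` supported on `[-1, 1]`; only the consequence `-1 ≤ L (X q²) / L (q²) ≤ 1` of the
support condition is recorded. -/
structure IsOrthogonalOnSegIcc (L : ℝ[X] →ₗ[ℝ] ℝ) (P : ℕ → ℝ[X]) (a b : ℕ → ℝ) : Prop
    extends IsMonicOrthogonal L P, ThreeTermRecurrence P a b where
  map_sq_pos : ∀ q : ℝ[X], q ≠ 0 → 0 < L (q * q)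
  abs_map_X_mul_le : ∀ q : ℝ[X], |L (X * (q * q))| ≤ L (q * q)

theorem map_eq_zero_of_degree_lt {R M : Type*} [CommRing R] [AddCommGroup M] [Module R M]
    {L : R[X] →ₗ[R] M} {n : ℕ} (hL : ∀ m < n, L (X ^ m) = 0) {q : R[X]} (hq : q.degree < n) :
    L q = 0 := by
  rcases eq_or_ne q 0 with rfl | hq0
  · exact map_zero L
  rw [q.as_sum_range_C_mul_X_pow' ((natDegree_lt_iff_degree_lt hq0).2 hq), map_sum]
  refine Finset.sum_eq_zero fun i hi => ?_
  rw [← smul_eq_C_mul, map_smul, hL i (Finset.mem_range.1 hi), smul_zero]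

namespace IsMonicOrthogonal

section CommRing

variable {R : Type*} [CommRing R] {L : R[X] →ₗ[R] R} {P : ℕ → R[X]} {a b : ℕ → R}

theorem zero_eq_one (hP : IsMonicOrthogonal L P) : P 0 = 1 :=
  (hP.monic 0).natDegree_eq_zero.1 (hP.natDegree_eq 0)

theorem coeff_self (hP : IsMonicOrthogonal L P) (n : ℕ) : (P n).coeff n = 1 := by
  simpa only [hP.natDegree_eq] using (hP.monic n).coeff_natDegree

theorem degree_lt (hP : IsMonicOrthogonal L P) {m n : ℕ} (h : m < n) : (P m).degree < n :=
  (degree_le_of_natDegree_le (hP.natDegree_eq m).le).trans_lt (Nat.cast_lt.2 h)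

theorem map_mul_eq_zero_of_degree_lt (hP : IsMonicOrthogonal L P) {q : R[X]} {n : ℕ}
    (hq : q.degree < n) : L (q * P n) = 0 :=
  map_eq_zero_of_degree_lt (L := L ∘ₗ LinearMap.mulRight R (P n)) (hP.orthogonal n) hq

theorem map_mul_eq_zero (hP : IsMonicOrthogonal L P) {m n : ℕ} (h : m < n) :
    L (P m * P n) = 0 :=
  hP.map_mul_eq_zero_of_degree_lt (hP.degree_lt h)

theorem degree_sub_smul_lt (hP : IsMonicOrthogonal L P) {q : R[X]} {n : ℕ}
    (hq : q.degree < (n + 1 : ℕ)) : (q - q.coeff n • P n).degree < n := by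
  rw [degree_lt_iff_coeff_zero] at hq ⊢
  intro m hm
  rw [coeff_sub, coeff_smul, smul_eq_mul]
  rcases hm.eq_or_lt with rfl | hlt
  · rw [hP.coeff_self, mul_one, sub_self]
  · rw [hq m hlt, coeff_eq_zero_of_natDegree_lt ((hP.natDegree_eq n).trans_lt hlt), mul_zero,
      sub_zero]

theorem map_mul_eq_coeff_mul (hP : IsMonicOrthogonal L P) {q : R[X]} {n : ℕ}
    (hq : q.degree < (n + 1 : ℕ)) : L (q * P n) = q.coeff n * L (P n * P n) := by
  have h := hP.map_mul_eq_zero_of_degree_lt (hP.degree_sub_smul_lt hq)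
  rwa [sub_mul, map_sub, smul_mul_assoc, map_smul, sub_eq_zero, smul_eq_mul] at h

theorem map_X_mul_mul_succ (hP : IsMonicOrthogonal L P) {q : R[X]} {n : ℕ}
    (hq : q.degree < (n + 1 : ℕ)) :
    L (X * q * P (n + 1)) = q.coeff n * L (P (n + 1) * P (n + 1)) := by
  have hXq : (X * q).degree < ((n + 1 + 1 : ℕ) : WithBot ℕ) := by
    rw [degree_lt_iff_coeff_zero] at hq ⊢
    rintro (_ | m) hm
    · omega
    · rw [coeff_X_mul, hq m (by omega)]
  rw [hP.map_mul_eq_coeff_mul hXq, coeff_X_mul]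

theorem map_mul_self_succ (hP : IsMonicOrthogonal L P)
    (hrec : ThreeTermRecurrence P a b) (n : ℕ) :
    L (P (n + 1) * P (n + 1)) = a (n + 1) ^ 2 * L (P n * P n) := by
  have hX : L (X * P n * P (n + 1)) = L (P (n + 1) * P (n + 1)) := by
    rw [hP.map_X_mul_mul_succ (hP.degree_lt n.lt_succ_self), hP.coeff_self, one_mul]
  have hexp : P n * P (n + 2) =
      X * P n * P (n + 1) - b (n + 1) • (P n * P (n + 1)) - a (n + 1) ^ 2 • (P n * P n) := by
    rw [hrec.succ_succ_eq, smul_eq_C_mul, smul_eq_C_mul]; ring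
  have h0 := hP.map_mul_eq_zero (show n < n + 2 by omega)
  rw [hexp, map_sub, map_sub, map_smul, map_smul, hX, hP.map_mul_eq_zero n.lt_succ_self,
    smul_zero, sub_zero, sub_eq_zero, smul_eq_mul] at h0
  exact h0

theorem map_X_mul_mul_self (hP : IsMonicOrthogonal L P) (hrec : ThreeTermRecurrence P a b) (n : ℕ) :
    L (X * (P n * P n)) = b n * L (P n * P n) := by
  have h0 := hP.map_mul_eq_zero n.lt_succ_self
  rcases n with _ | n
  · rw [hrec.one_eq, hP.zero_eq_one, one_mul, ← mul_one (C (b 0)), ← smul_eq_C_mul, map_sub,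
      map_smul, sub_eq_zero] at h0
    simpa only [hP.zero_eq_one, mul_one, smul_eq_mul] using h0
  · have hexp : P (n + 1) * P (n + 2) = X * (P (n + 1) * P (n + 1))
        - b (n + 1) • (P (n + 1) * P (n + 1)) - a (n + 1) ^ 2 • (P n * P (n + 1)) := by
      rw [hrec.succ_succ_eq, smul_eq_C_mul, smul_eq_C_mul]; ring
    rwa [hexp, map_sub, map_sub, map_smul, map_smul, hP.map_mul_eq_zero n.lt_succ_self,
      smul_zero, sub_zero, sub_eq_zero, smul_eq_mul] at h0

end CommRing

theorem eq_sum_smul {F : Type*} [Field F] {L : F[X] →ₗ[F] F} {P : ℕ → F[X]}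
    (hP : IsMonicOrthogonal L P) (hL : ∀ n, L (P n * P n) ≠ 0) {n : ℕ} {q : F[X]}
    (hq : q.degree < n) :
    q = ∑ k ∈ Finset.range n, (L (q * P k) / L (P k * P k)) • P k := by
  induction n generalizing q with
  | zero => simpa using hq
  | succ n ih =>
    have hcoeff : L (q * P n) / L (P n * P n) = q.coeff n := by
      rw [hP.map_mul_eq_coeff_mul hq, mul_div_cancel_right₀ _ (hL n)]
    have hlower (k : ℕ) (hk : k < n) : L ((q - q.coeff n • P n) * P k) = L (q * P k) := by
      rw [sub_mul, map_sub, smul_mul_assoc, map_smul, mul_comm (P n), hP.map_mul_eq_zero hk,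
        smul_zero, sub_zero]
    have hrest := ih (hP.degree_sub_smul_lt hq)
    rw [Finset.sum_congr rfl fun k hk => by rw [hlower k (Finset.mem_range.1 hk)]] at hrest
    rw [Finset.sum_range_succ, hcoeff, ← hrest, sub_add_cancel]

theorem eq_sub_sum_of_finite_rank {F ι : Type*} [Field F] [Fintype ι] {L : F[X] →ₗ[F] F}
    {P : ℕ → F[X]} (hP : IsMonicOrthogonal L P) (hL : ∀ n, L (P n * P n) ≠ 0)
    (ℓ : ι → F[X] →ₗ[F] F) (η : ι → F) {n : ℕ} {s : F[X]} (hs : s.Monic) (hsn : s.natDegree = n)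
    (horth : ∀ m < n, L (X ^ m * s) + ∑ j, η j * ℓ j (X ^ m) * ℓ j s = 0) :
    s = P n - ∑ j, (η j * ℓ j s) • ∑ k ∈ Finset.range n, (ℓ j (P k) / L (P k * P k)) • P k := by
  have hpair (k : ℕ) (hk : k < n) : L (s * P k) = -∑ j, η j * ℓ j s * ℓ j (P k) := by
    have h := map_eq_zero_of_degree_lt
      (L := L ∘ₗ LinearMap.mulRight F s + ∑ j, (η j * ℓ j s) • ℓ j)
      (fun m hm => by simpa [mul_right_comm] using horth m hm) (hP.degree_lt hk)
    simpa [mul_comm s, add_eq_zero_iff_eq_neg] using h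
  have hdeg : (s - P n).degree < n := by
    have hcoeff : s.coeff n = 1 := by simpa only [hsn] using hs.coeff_natDegree
    simpa only [hcoeff, one_smul] using hP.degree_sub_smul_lt
      ((degree_le_of_natDegree_le hsn.le).trans_lt (Nat.cast_lt.2 n.lt_succ_self))
  have hcoeff (k : ℕ) (hk : k < n) : L ((s - P n) * P k) = -∑ j, η j * ℓ j s * ℓ j (P k) := by
    rw [sub_mul, map_sub, mul_comm (P n), hP.map_mul_eq_zero hk, sub_zero, hpair k hk]
  rw [sub_eq_add_neg]
  refine eq_add_of_sub_eq' ((hP.eq_sum_smul hL hdeg).trans ?_)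
  simp only [Finset.smul_sum, smul_smul]
  rw [Finset.sum_comm, ← Finset.sum_neg_distrib]
  refine Finset.sum_congr rfl fun k hk => ?_
  rw [hcoeff k (Finset.mem_range.1 hk), neg_div, neg_smul, Finset.sum_div, Finset.sum_smul]
  simp only [mul_div_assoc]

section KernelSum

/-- The polynomial `∑ k ≤ n, (α k / L (P k ^ 2)) P k`. For `α k = P k x` it is the
Christoffel–Darboux kernel `K_n(x, ·)`; its real and imaginary parts at a complex point `z` arise
from `α k = re (P k z)` and `α k = im (P k z)`. -/
def kernelSum {F : Type*} [Field F] (L : F[X] →ₗ[F] F) (P : ℕ → F[X]) (α : ℕ → F)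
    (n : ℕ) : F[X] :=
  ∑ k ∈ Finset.range (n + 1), (α k / L (P k * P k)) • P k

variable {F : Type*} [Field F] {L : F[X] →ₗ[F] F} {P : ℕ → F[X]} {a b : ℕ → F}

theorem kernelSum_succ (α : ℕ → F) (n : ℕ) : kernelSum L P α (n + 1) =
    kernelSum L P α n + (α (n + 1) / L (P (n + 1) * P (n + 1))) • P (n + 1) :=
  Finset.sum_range_succ _ _

theorem degree_kernelSum_lt (hP : IsMonicOrthogonal L P) (α : ℕ → F) (n : ℕ) :
    (kernelSum L P α n).degree < (n + 1 : ℕ) := by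
  rw [← mem_degreeLT]
  exact Submodule.sum_mem _ fun k hk => Submodule.smul_mem _ _
    (mem_degreeLT.2 (hP.degree_lt (Finset.mem_range.1 hk)))

theorem coeff_kernelSum (hP : IsMonicOrthogonal L P) (α : ℕ → F) (n : ℕ) :
    (kernelSum L P α n).coeff n = α n / L (P n * P n) := by
  rw [kernelSum, Finset.sum_range_succ, coeff_add, coeff_smul, hP.coeff_self, smul_eq_mul, mul_one,
    add_eq_right, finsetSum_coeff]
  refine Finset.sum_eq_zero fun k hk => ?_
  rw [coeff_smul, coeff_eq_zero_of_degree_lt (hP.degree_lt (Finset.mem_range.1 hk)), smul_zero]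

theorem map_kernelSum_mul_self (hP : IsMonicOrthogonal L P) (hL : ∀ n, L (P n * P n) ≠ 0)
    (α : ℕ → F) (n : ℕ) : L (kernelSum L P α n * kernelSum L P α n) =
      ∑ k ∈ Finset.range (n + 1), α k ^ 2 / L (P k * P k) := by
  induction n with
  | zero =>
    have h0 := hL 0
    simp only [kernelSum, zero_add, Finset.sum_range_one, smul_mul_assoc, mul_smul_comm, map_smul,
      smul_eq_mul]
    field_simp
  | succ n ih =>
    have hn := hL (n + 1)
    set A := kernelSum L P α n
    set t := α (n + 1) / L (P (n + 1) * P (n + 1)) with ht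
    have hexp : (A + t • P (n + 1)) * (A + t • P (n + 1)) =
        A * A + (2 * t) • (A * P (n + 1)) + t ^ 2 • (P (n + 1) * P (n + 1)) := by
      simp only [smul_eq_C_mul, C_mul, C_pow, map_ofNat]
      ring
    rw [Finset.sum_range_succ, ← ih, kernelSum_succ, hexp, map_add, map_add, map_smul, map_smul,
      hP.map_mul_eq_zero_of_degree_lt (hP.degree_kernelSum_lt α n), smul_zero, add_zero,
      smul_eq_mul, ht]
    field_simp

theorem map_X_mul_kernelSum_zero (hP : IsMonicOrthogonal L P) (hL : ∀ n, L (P n * P n) ≠ 0)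
    (hrec : ThreeTermRecurrence P a b)
    (α : ℕ → F) : L (X * (kernelSum L P α 0 * kernelSum L P α 0)) =
      b 0 * α 0 ^ 2 / L (P 0 * P 0) := by
  have h0 := hL 0
  simp only [kernelSum, zero_add, Finset.sum_range_one, smul_mul_assoc, mul_smul_comm, map_smul,
    hP.map_X_mul_mul_self hrec, smul_eq_mul]
  field_simp

theorem map_X_mul_kernelSum_succ (hP : IsMonicOrthogonal L P) (hL : ∀ n, L (P n * P n) ≠ 0)
    (hrec : ThreeTermRecurrence P a b)
    (α : ℕ → F) (n : ℕ) : L (X * (kernelSum L P α (n + 1) * kernelSum L P α (n + 1))) =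
      L (X * (kernelSum L P α n * kernelSum L P α n)) + 2 * (α n * α (n + 1)) / L (P n * P n)
        + b (n + 1) * α (n + 1) ^ 2 / L (P (n + 1) * P (n + 1)) := by
  set A := kernelSum L P α n with hA
  set t := α (n + 1) / L (P (n + 1) * P (n + 1)) with ht
  have hexp : X * (kernelSum L P α (n + 1) * kernelSum L P α (n + 1)) = X * (A * A)
      + (2 * t) • (X * A * P (n + 1)) + t ^ 2 • (X * (P (n + 1) * P (n + 1))) := by
    simp only [kernelSum_succ, ← hA, ← ht, smul_eq_C_mul, C_mul, C_pow, map_ofNat]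
    ring
  have hn := hL n
  have hn' := hL (n + 1)
  rw [hexp, map_add, map_add, map_smul, map_smul, hP.map_X_mul_mul_self hrec,
    hP.map_X_mul_mul_succ (hP.degree_kernelSum_lt α n), hP.coeff_kernelSum, ht, smul_eq_mul,
    smul_eq_mul]
  field_simp

end KernelSum

section ChristoffelDarboux

open scoped ComplexConjugate

variable {L : ℝ[X] →ₗ[ℝ] ℝ} {P : ℕ → ℝ[X]} {a b : ℕ → ℝ}

theorem aeval_succ_succ_mul_conj_div (hP : IsMonicOrthogonal L P) (hL : ∀ n, L (P n * P n) ≠ 0)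
    (hrec : ThreeTermRecurrence P a b)
    (z : ℂ) (n : ℕ) :
    aeval z (P (n + 2)) * conj (aeval z (P (n + 1))) / (L (P (n + 1) * P (n + 1)) : ℂ) =
      (z - b (n + 1)) * (aeval z (P (n + 1)) * conj (aeval z (P (n + 1))))
          / (L (P (n + 1) * P (n + 1)) : ℂ)
        - aeval z (P n) * conj (aeval z (P (n + 1))) / (L (P n * P n) : ℂ) := by
  have hn : (L (P n * P n) : ℂ) ≠ 0 := Complex.ofReal_ne_zero.2 (hL n)
  have hn' : (L (P (n + 1) * P (n + 1)) : ℂ) ≠ 0 := Complex.ofReal_ne_zero.2 (hL (n + 1))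
  have hsucc : (L (P (n + 1) * P (n + 1)) : ℂ) = a (n + 1) ^ 2 * L (P n * P n) := by
    rw [hP.map_mul_self_succ hrec]; push_cast; rfl
  have hz : aeval z (P (n + 2)) =
      (z - b (n + 1)) * aeval z (P (n + 1)) - a (n + 1) ^ 2 * aeval z (P n) := by
    simp [hrec.succ_succ_eq]
  rw [hz]
  field_simp
  rw [hsucc]
  ring

theorem aeval_mul_conj_aeval_div (hP : IsMonicOrthogonal L P) (hL : ∀ n, L (P n * P n) ≠ 0)
    (hrec : ThreeTermRecurrence P a b)
    (z : ℂ) (n : ℕ) :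
    let A := kernelSum L P (fun k => (aeval z (P k)).re) n
    let B := kernelSum L P (fun k => (aeval z (P k)).im) n
    aeval z (P (n + 1)) * conj (aeval z (P n)) / (L (P n * P n) : ℂ) =
      z * (L (A * A) + L (B * B) : ℝ) - (L (X * (A * A)) + L (X * (B * B)) : ℝ) := by
  intro A B
  simp only [A, B]
  induction n with
  | zero =>
    simp only [hP.map_kernelSum_mul_self hL, hP.map_X_mul_kernelSum_zero hL hrec, hP.zero_eq_one,
      hrec.one_eq, zero_add, Finset.sum_range_one, aeval_sub, aeval_X, aeval_C,
      Complex.coe_algebraMap, map_one, mul_one, Complex.one_re, Complex.one_im]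
    push_cast
    ring
  | succ n ih =>
    set p := aeval z (P (n + 1)) with hp
    set q := aeval z (P n) with hq
    have hsq : p * conj p = (p.re ^ 2 + p.im ^ 2 : ℝ) := by
      rw [Complex.mul_conj, Complex.normSq_apply, sq, sq]
    have hcross : q * conj p =
        (2 * (q.re * p.re) + 2 * (q.im * p.im) : ℝ) - p * conj q := by
      apply Complex.ext <;> simp <;> ring
    rw [hP.aeval_succ_succ_mul_conj_div hL hrec, ← hp, ← hq, hsq, hcross, sub_div, ih]
    simp only [hP.map_kernelSum_mul_self hL, hP.map_X_mul_kernelSum_succ hL hrec,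
      Finset.sum_range_succ _ (n + 1), ← hp, ← hq]
    push_cast
    ring

end ChristoffelDarboux

end IsMonicOrthogonal

namespace IsOrthogonalOnSegIcc

open IsMonicOrthogonal
open scoped ComplexConjugate

variable {L : ℝ[X] →ₗ[ℝ] ℝ} {P : ℕ → ℝ[X]} {a b : ℕ → ℝ}

theorem map_mul_self_pos (hP : IsOrthogonalOnSegIcc L P a b) (n : ℕ) : 0 < L (P n * P n) :=
  hP.map_sq_pos _ (hP.monic n).ne_zero

theorem map_mul_self_ne_zero (hP : IsOrthogonalOnSegIcc L P a b) (n : ℕ) : L (P n * P n) ≠ 0 :=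
  (hP.map_mul_self_pos n).ne'

theorem exists_aeval_mul_conj_eq (hP : IsOrthogonalOnSegIcc L P a b)
    (z : ℂ) (n : ℕ) : ∃ σ : ℝ, 0 < σ ∧ Complex.normSq (aeval z (P n)) ≤ σ ∧
      ∃ x ∈ Set.Icc (-1 : ℝ) 1,
        aeval z (P (n + 1)) * conj (aeval z (P n)) = σ * (z - x) := by
  have hh := hP.map_mul_self_pos
  have hL := hP.map_mul_self_ne_zero
  have hCD := hP.aeval_mul_conj_aeval_div hL hP.toThreeTermRecurrence z n
  set A := kernelSum L P (fun k => (aeval z (P k)).re) n with hA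
  set B := kernelSum L P (fun k => (aeval z (P k)).im) n with hB
  set τ := L (A * A) + L (B * B) with hτ
  have hτ_sum : τ = ∑ k ∈ Finset.range (n + 1),
      Complex.normSq (aeval z (P k)) / L (P k * P k) := by
    simp only [hτ, hA, hB, hP.map_kernelSum_mul_self hL, ← Finset.sum_add_distrib, ← add_div,
      Complex.normSq_apply, sq]
  have hle (k : ℕ) (hk : k < n + 1) : Complex.normSq (aeval z (P k)) / L (P k * P k) ≤ τ :=
    hτ_sum ▸ Finset.single_le_sum
      (f := fun k => Complex.normSq (aeval z (P k)) / L (P k * P k))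
      (fun k _ => div_nonneg (Complex.normSq_nonneg _) (hh k).le) (Finset.mem_range.2 hk)
  have hτ_pos : 0 < τ := by
    refine lt_of_lt_of_le ?_ (hle 0 n.succ_pos)
    simpa [hP.zero_eq_one] using hh 0
  have hmean : |L (X * (A * A)) + L (X * (B * B))| ≤ τ :=
    (abs_add_le _ _).trans (add_le_add (hP.abs_map_X_mul_le A) (hP.abs_map_X_mul_le B))
  refine ⟨L (P n * P n) * τ, mul_pos (hh n) hτ_pos, ?_,
    (L (X * (A * A)) + L (X * (B * B))) / τ, ?_, ?_⟩
  · rw [mul_comm]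
    exact (div_le_iff₀ (hh n)).1 (hle n n.lt_succ_self)
  · rw [Set.mem_Icc, ← abs_le, abs_div, abs_of_pos hτ_pos]
    exact (div_le_one hτ_pos).2 hmean
  · have hn : (L (P n * P n) : ℂ) ≠ 0 := Complex.ofReal_ne_zero.2 (hL n)
    have hτ' : (τ : ℂ) ≠ 0 := Complex.ofReal_ne_zero.2 hτ_pos.ne'
    rw [div_eq_iff hn] at hCD
    rw [hCD, ← hτ]
    push_cast
    field_simp

theorem aeval_ne_zero (hP : IsOrthogonalOnSegIcc L P a b)
    {z : ℂ} (hz : z ∉ segIcc) (n : ℕ) : aeval z (P n) ≠ 0 := by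
  rcases n with _ | n
  · simp [hP.zero_eq_one]
  · obtain ⟨σ, hσ, -, x, hx, h⟩ := hP.exists_aeval_mul_conj_eq z n
    intro h0
    rw [h0, zero_mul, eq_comm, mul_eq_zero, or_iff_right (Complex.ofReal_ne_zero.2 hσ.ne'),
      sub_eq_zero] at h
    exact hz ⟨x, hx, h.symm⟩

theorem exists_aeval_succ_eq (hP : IsOrthogonalOnSegIcc L P a b)
    {z : ℂ} (hz : z ∉ segIcc) (n : ℕ) :
    ∃ t : ℝ, 1 ≤ t ∧ ∃ x ∈ Set.Icc (-1 : ℝ) 1,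
      aeval z (P (n + 1)) / aeval z (P n) = t * (z - x) := by
  obtain ⟨σ, -, hσ, x, hx, h⟩ := hP.exists_aeval_mul_conj_eq z n
  have hn := hP.aeval_ne_zero hz n
  refine ⟨σ / Complex.normSq (aeval z (P n)),
    (one_le_div₀ (Complex.normSq_pos.2 hn)).2 hσ, x, hx, ?_⟩
  have hconj : conj (aeval z (P n)) ≠ 0 := (_root_.map_ne_zero _).2 hn
  rw [Complex.ofReal_div, ← Complex.mul_conj, div_mul_eq_mul_div, ← h]
  field_simp

theorem norm_aeval_div_aeval_succ_le (hP : IsOrthogonalOnSegIcc L P a b)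
    {z : ℂ} (hz : z ∉ segIcc) (n : ℕ) :
    ‖aeval z (P n) / aeval z (P (n + 1))‖ ≤ (Metric.infDist z segIcc)⁻¹ := by
  obtain ⟨t, ht, x, hx, h⟩ := hP.exists_aeval_succ_eq hz n
  rw [← inv_div, h, norm_inv, norm_mul, Complex.norm_real, Real.norm_of_nonneg (by linarith),
    ← dist_eq_norm]
  have hdist : Metric.infDist z segIcc ≤ dist z x := Metric.infDist_le_dist_of_mem ⟨x, hx, rfl⟩
  refine inv_anti₀ (infDist_segIcc_pos hz) (hdist.trans ?_)
  exact le_mul_of_one_le_left dist_nonneg ht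

theorem im_sq_le_im_mul_im_aeval_succ_div (hP : IsOrthogonalOnSegIcc L P a b)
    {z : ℂ} (hz : z ∉ segIcc) (n : ℕ) :
    z.im ^ 2 ≤ z.im * (aeval z (P (n + 1)) / aeval z (P n)).im := by
  obtain ⟨t, ht, x, -, h⟩ := hP.exists_aeval_succ_eq hz n
  have him : (aeval z (P (n + 1)) / aeval z (P n)).im = t * z.im := by simp [h]
  rw [him]
  nlinarith [sq_nonneg z.im]

end IsOrthogonalOnSegIcc

section Contraction

theorem tendstoUniformlyOn_of_dist_succ_le {α β : Type*} [PseudoMetricSpace β]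
    {u : ℕ → α → β} {U : α → β} {K : Set α} {r : ℝ} (hr0 : 0 ≤ r) (hr1 : r < 1)
    (hstep : ∀ ε > 0, ∀ᶠ n in atTop, ∀ z ∈ K, dist (u (n + 1) z) (U z) ≤ r * dist (u n z) (U z) + ε)
    (hbdd : ∀ᶠ n in atTop, ∃ B, ∀ z ∈ K, dist (u n z) (U z) ≤ B) :
    TendstoUniformlyOn u U atTop K := by
  rw [Metric.tendstoUniformlyOn_iff]
  intro ε hε
  obtain ⟨m, hm, B, hB⟩ := ((eventually_forall_ge_atTop.2
    (hstep ((1 - r) * (ε / 2)) (by nlinarith))).and hbdd).exists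
  have hiter (k : ℕ) : ∀ z ∈ K, dist (u (m + k) z) (U z) ≤ r ^ k * B + ε / 2 := by
    induction k with
    | zero => exact fun z hz => (hB z hz).trans (by rw [pow_zero, one_mul]; linarith)
    | succ k ih =>
      intro z hz
      calc dist (u (m + k + 1) z) (U z)
          ≤ r * dist (u (m + k) z) (U z) + (1 - r) * (ε / 2) := hm _ (by omega) z hz
        _ ≤ r * (r ^ k * B + ε / 2) + (1 - r) * (ε / 2) := by gcongr; exact ih z hz
        _ = r ^ (k + 1) * B + ε / 2 := by ring
  have hpow : Tendsto (fun k => r ^ k * B) atTop (nhds 0) := by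
    simpa using (tendsto_pow_atTop_nhds_zero_of_lt_one hr0 hr1).mul_const B
  have hsmall : ∀ᶠ k in atTop, r ^ k * B < ε / 2 := hpow.eventually_lt_const (half_pos hε)
  rw [← map_add_atTop_eq_nat m, eventually_map]
  filter_upwards [hsmall] with k hk z hz
  rw [dist_comm, add_comm k m]
  linarith [hiter k z hz]

theorem tendsto_of_dist_succ_le {β : Type*} [PseudoMetricSpace β] {u : ℕ → β} {U : β} {r : ℝ}
    (hr0 : 0 ≤ r) (hr1 : r < 1)
    (hstep : ∀ ε > 0, ∀ᶠ n in atTop, dist (u (n + 1)) U ≤ r * dist (u n) U + ε) :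
    Tendsto u atTop (nhds U) := by
  have h := tendstoUniformlyOn_of_dist_succ_le (u := fun n (_ : Unit) => u n) (U := fun _ => U)
    (K := Set.univ) hr0 hr1 (by simpa using hstep)
    (.of_forall fun n => ⟨dist (u n) U, fun _ _ => le_rfl⟩)
  exact h.tendsto_at (Set.mem_univ ())

variable {α 𝕜 : Type*} [NormedField 𝕜] {g : ℕ → α → 𝕜} {Q : α → 𝕜} {K : Set α}

theorem eventually_continuousOn_div_succ [TopologicalSpace α] (hg : ∀ n, ContinuousOn (g n) K)
    (hne : ∀ᶠ n in atTop, ∀ z ∈ K, g n z ≠ 0) :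
    ∀ᶠ n in atTop, ContinuousOn (fun z => g n z / g (n + 1) z) K :=
  ((tendsto_add_atTop_nat 1).eventually hne).mono fun n hn => (hg n).div (hg (n + 1)) hn

theorem exists_norm_le_lt_one_of_tendstoUniformlyOn [TopologicalSpace α] (hK : IsCompact K)
    {f : ℕ → α → 𝕜} (hf : ∀ᶠ n in atTop, ContinuousOn (f n) K)
    (hlim : TendstoUniformlyOn f Q atTop K) (hQ : ∀ z ∈ K, ‖Q z‖ < 1) :
    ∃ r, 0 ≤ r ∧ r < 1 ∧ ∀ z ∈ K, ‖Q z‖ ≤ r := by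
  rcases K.eq_empty_or_nonempty with rfl | hne
  · exact ⟨0, le_rfl, one_pos, by simp⟩
  obtain ⟨w, hw, hmax⟩ := hK.exists_isMaxOn hne (hlim.continuousOn hf.frequently).norm
  exact ⟨‖Q w‖, norm_nonneg _, hQ w hw, hmax⟩

theorem sum_range_succ_div {F : Type*} [Field F] {g : ℕ → F} {n : ℕ} (hn : g n ≠ 0) :
    (∑ k ∈ Finset.range (n + 1), g k) / g (n + 1) =
      g n / g (n + 1) * (1 + (∑ k ∈ Finset.range n, g k) / g n) := by
  rw [Finset.sum_range_succ, mul_add, mul_one, div_mul_div_comm, mul_comm (g n),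
    mul_div_mul_right _ _ hn, ← add_div, add_comm]

theorem one_sub_ne_zero_of_norm_lt_one {q : 𝕜} (hq : ‖q‖ < 1) : 1 - q ≠ 0 := by
  rintro h
  rw [← sub_eq_zero.1 h, norm_one] at hq
  exact hq.false

theorem norm_one_add_div_one_sub_le {q : 𝕜} {r : ℝ} (hr : r < 1) (hq : ‖q‖ ≤ r) :
    ‖1 + q / (1 - q)‖ ≤ (1 - r)⁻¹ := by
  rw [one_add_div (one_sub_ne_zero_of_norm_lt_one (hq.trans_lt hr)), sub_add_cancel, one_div,
    norm_inv]
  have hle : 1 - ‖q‖ ≤ ‖1 - q‖ := by simpa only [norm_one] using norm_sub_norm_le 1 q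
  exact inv_anti₀ (by linarith) (by linarith)

theorem sum_range_succ_div_sub {F : Type*} [Field F] {g : ℕ → F} {n : ℕ} (hn : g n ≠ 0) {q : F}
    (hq : 1 - q ≠ 0) :
    (∑ k ∈ Finset.range (n + 1), g k) / g (n + 1) - q / (1 - q) =
      g n / g (n + 1) * ((∑ k ∈ Finset.range n, g k) / g n - q / (1 - q))
        + (g n / g (n + 1) - q) * (1 + q / (1 - q)) := by
  rw [sum_range_succ_div hn]
  field_simp
  ring

/-- A Stolz–Cesàro theorem for geometrically growing `g`. -/
theorem tendstoUniformlyOn_sum_range_div [TopologicalSpace α] (hK : IsCompact K)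
    (hg : ∀ n, ContinuousOn (g n) K) (hne : ∀ᶠ n in atTop, ∀ z ∈ K, g n z ≠ 0)
    (hlim : TendstoUniformlyOn (fun n z => g n z / g (n + 1) z) Q atTop K)
    (hQ : ∀ z ∈ K, ‖Q z‖ < 1) :
    TendstoUniformlyOn (fun n z => (∑ k ∈ Finset.range n, g k z) / g n z)
      (fun z => Q z / (1 - Q z)) atTop K := by
  obtain ⟨r₀, hr₀, hr₀1, hQr⟩ := exists_norm_le_lt_one_of_tendstoUniformlyOn hK
    (eventually_continuousOn_div_succ hg hne) hlim hQ
  obtain ⟨r, hr₀r, hr1⟩ := exists_between hr₀1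
  have hQc : ContinuousOn Q K :=
    hlim.continuousOn (eventually_continuousOn_div_succ hg hne).frequently
  rw [Metric.tendstoUniformlyOn_iff] at hlim
  refine tendstoUniformlyOn_of_dist_succ_le (hr₀.trans hr₀r.le) hr1 (fun ε hε => ?_) ?_
  · filter_upwards [hne, hlim (r - r₀) (by linarith), hlim (ε * (1 - r₀))
      (mul_pos hε (by linarith))] with n hn hratio hclose z hz
    have hbound : ‖g n z / g (n + 1) z‖ ≤ r := by
      have := norm_le_norm_add_norm_sub' (g n z / g (n + 1) z) (Q z)
      rw [← dist_eq_norm, dist_comm] at this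
      linarith [hratio z hz, hQr z hz]
    rw [dist_eq_norm, sum_range_succ_div_sub (hn z hz) (one_sub_ne_zero_of_norm_lt_one (hQ z hz))]
    refine (norm_add_le _ _).trans ?_
    rw [norm_mul, norm_mul, ← dist_eq_norm, ← dist_eq_norm (g n z / g (n + 1) z),
      dist_comm (g n z / g (n + 1) z)]
    gcongr
    calc dist (Q z) (g n z / g (n + 1) z) * ‖1 + Q z / (1 - Q z)‖
        ≤ ε * (1 - r₀) * (1 - r₀)⁻¹ := by
          gcongr
          exacts [(hclose z hz).le, norm_one_add_div_one_sub_le hr₀1 (hQr z hz)]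
      _ = ε := mul_inv_cancel_right₀ (by linarith) ε
  · filter_upwards [hne] with n hn
    simp only [dist_eq_norm]
    refine hK.exists_bound_of_continuousOn (.sub (.div ?_ (hg n) hn) (.div hQc ?_ ?_))
    · exact continuousOn_finsetSum _ fun k _ => hg k
    · exact continuousOn_const.sub hQc
    · exact fun z hz => one_sub_ne_zero_of_norm_lt_one (hQ z hz)

theorem tendsto_sum_range_div {g : ℕ → 𝕜} {q : 𝕜} (hne : ∀ᶠ n in atTop, g n ≠ 0)
    (hlim : Tendsto (fun n => g n / g (n + 1)) atTop (nhds q)) (hq : ‖q‖ < 1) :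
    Tendsto (fun n => (∑ k ∈ Finset.range n, g k) / g n) atTop (nhds (q / (1 - q))) := by
  have h := tendstoUniformlyOn_sum_range_div (g := fun n (_ : Unit) => g n) (Q := fun _ => q)
    (K := {()}) isCompact_singleton (fun n => continuousOn_const) (hne.mono fun n hn _ _ => hn)
    (tendstoUniformlyOn_singleton_iff_tendsto.2 hlim) (fun _ _ => hq)
  exact h.tendsto_at (Set.mem_singleton ())

theorem tendsto_inv_zero_of_tendsto_div_succ {g : ℕ → 𝕜} [CompleteSpace 𝕜] {q : 𝕜}
    (hne : ∀ᶠ n in atTop, g n ≠ 0)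
    (hlim : Tendsto (fun n => g n / g (n + 1)) atTop (nhds q)) (hq : ‖q‖ < 1) :
    Tendsto (fun n => (g n)⁻¹) atTop (nhds 0) := by
  refine (summable_of_ratio_test_tendsto_lt_one hq (hne.mono fun n hn => inv_ne_zero hn)
    (hlim.norm.congr fun n => ?_)).tendsto_atTop_zero
  rw [norm_div, norm_inv, norm_inv, div_inv_eq_mul, mul_comm, div_eq_mul_inv]

end Contraction

section Moebius

variable {𝕜 : Type*} [NormedField 𝕜] {lam mu : 𝕜} {g e : ℕ → 𝕜}

/-- In the coordinate `s = (g - lam) / (g - mu)` the Möbius map `g ↦ lam + mu - lam * mu / g`, with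
fixed points `lam` and `mu`, is multiplication by `mu / lam`. -/
theorem moebius_coordinate_succ (hlam : lam ≠ 0) {g g' e : 𝕜} (hg : g ≠ 0) (hgmu : g - mu ≠ 0)
    (hg'mu : g' - mu ≠ 0) (hrec : g' = lam + mu - lam * mu / g + e) :
    (g' - lam) / (g' - mu) = mu / lam * ((g - lam) / (g - mu))
      + e * (1 - mu / lam * ((g - lam) / (g - mu))) / (g' - mu) := by
  have hmul : g' * g = (lam + mu + e) * g - lam * mu := by
    rw [hrec]; field_simp; ring
  rw [div_eq_iff hg'mu, add_mul, div_mul_cancel₀ _ hg'mu]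
  field_simp
  linear_combination (lam - mu) * hmul

theorem norm_moebius_coordinate_le {g : 𝕜} {δ : ℝ} (hδ : 0 < δ) (hg : δ ≤ ‖g - mu‖) :
    ‖(g - lam) / (g - mu)‖ ≤ 1 + ‖mu - lam‖ / δ := by
  have hne : g - mu ≠ 0 := norm_pos_iff.1 (hδ.trans_le hg)
  have hsplit : (g - lam) / (g - mu) = 1 + (mu - lam) / (g - mu) := by
    field_simp; ring
  calc ‖(g - lam) / (g - mu)‖ ≤ ‖(1 : 𝕜)‖ + ‖(mu - lam) / (g - mu)‖ := hsplit ▸ norm_add_le _ _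
    _ ≤ 1 + ‖mu - lam‖ / δ := by rw [norm_one, norm_div]; gcongr

theorem tendsto_moebius_coordinate (hlt : ‖mu‖ < ‖lam‖) (hg : ∀ n, g n ≠ 0) {δ : ℝ} (hδ : 0 < δ)
    (hsep : ∀ n, δ ≤ ‖g n - mu‖) (hrec : ∀ n, g (n + 1) = lam + mu - lam * mu / g n + e n)
    (he : Tendsto e atTop (nhds 0)) :
    Tendsto (fun n => (g n - lam) / (g n - mu)) atTop (nhds 0) := by
  have hlam : lam ≠ 0 := norm_pos_iff.1 ((norm_nonneg _).trans_lt hlt)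
  have hne (n : ℕ) : g n - mu ≠ 0 := norm_pos_iff.1 (hδ.trans_le (hsep n))
  set B := 1 + ‖mu / lam‖ * (1 + ‖mu - lam‖ / δ)
  have hr1 : ‖mu / lam‖ < 1 := by rwa [norm_div, div_lt_one (norm_pos_iff.2 hlam)]
  have hsmall : Tendsto (fun n => ‖e n‖ * B / δ) atTop (nhds 0) := by
    simpa using (he.norm.mul_const B).div_const δ
  refine tendsto_of_dist_succ_le (norm_nonneg (mu / lam)) hr1 fun ε hε => ?_
  filter_upwards [hsmall.eventually_le_const hε] with n hn
  set s := (g n - lam) / (g n - mu)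
  have hs : ‖1 - mu / lam * s‖ ≤ B := by
    refine (norm_sub_le _ _).trans ?_
    rw [norm_one, norm_mul]
    refine add_le_add_right (mul_le_mul_of_nonneg_left ?_ (norm_nonneg _)) _
    exact norm_moebius_coordinate_le hδ (hsep n)
  rw [dist_zero_right, dist_zero_right,
    moebius_coordinate_succ hlam (hg n) (hne n) (hne (n + 1)) (hrec n)]
  refine (norm_add_le _ _).trans ?_
  rw [norm_mul (mu / lam)]
  refine add_le_add_right (le_trans ?_ hn) _
  rw [norm_div, norm_mul]
  gcongr
  exact hsep (n + 1)

theorem tendsto_of_perturbed_moebius (hlt : ‖mu‖ < ‖lam‖) (hg : ∀ n, g n ≠ 0) {δ : ℝ}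
    (hδ : 0 < δ) (hsep : ∀ n, δ ≤ ‖g n - mu‖)
    (hrec : ∀ n, g (n + 1) = lam + mu - lam * mu / g n + e n)
    (he : Tendsto e atTop (nhds 0)) : Tendsto g atTop (nhds lam) := by
  have hs := tendsto_moebius_coordinate hlt hg hδ hsep hrec he
  have hmulam : mu - lam ≠ 0 := fun h => hlt.ne (by rw [sub_eq_zero.1 h])
  have hlim : Tendsto (fun n => mu + (mu - lam) / ((g n - lam) / (g n - mu) - 1)) atTop
      (nhds (mu + (mu - lam) / (0 - 1))) :=
    (tendsto_const_nhds.div (hs.sub_const 1) (by simp)).const_add mu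
  have heq : mu + (mu - lam) / (0 - 1) = lam := by ring
  rw [heq] at hlim
  refine hlim.congr fun n => ?_
  have hne : g n - mu ≠ 0 := norm_pos_iff.1 (hδ.trans_le (hsep n))
  have hsub : (g n - lam) / (g n - mu) - 1 = (mu - lam) / (g n - mu) := by
    field_simp; ring
  rw [hsub, div_div_cancel₀ hmulam, add_sub_cancel]

end Moebius

section Vitali

theorem exists_mem_nhds_eventually_dist_lt_of_equicontinuousAt {ι α β : Type*} [TopologicalSpace α]
    [PseudoMetricSpace β] {l : Filter ι} {f : ι → α → β} {F : α → β} {x : α}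
    (hf : EquicontinuousAt f x) (hF : ContinuousAt F x)
    (hlim : ∃ᶠ y in nhds x, Tendsto (fun n => f n y) l (nhds (F y))) {ε : ℝ} (hε : 0 < ε) :
    ∃ t ∈ nhds x, ∀ᶠ n in l, ∀ y ∈ t, dist (F y) (f n y) < ε := by
  have hε5 : 0 < ε / 5 := by positivity
  have hnear : ∀ᶠ y in nhds x, (∀ n, dist (f n x) (f n y) < ε / 5) ∧ dist (F y) (F x) < ε / 5 :=
    (Metric.equicontinuousAt_iff_right.1 hf _ hε5).and (Metric.tendsto_nhds.1 hF _ hε5)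
  obtain ⟨w, hw, hfw, hFw⟩ := (hlim.and_eventually hnear).exists
  refine ⟨_, hnear, ?_⟩
  filter_upwards [Metric.tendsto_nhds.1 hw _ hε5] with n hn y hy
  calc dist (F y) (f n y)
      ≤ dist (F y) (F x) + dist (F w) (F x) + dist (f n w) (F w)
        + dist (f n x) (f n w) + dist (f n x) (f n y) := by
        linarith [dist_triangle4 (F y) (F x) (F w) (f n y),
          dist_triangle4 (F w) (f n w) (f n x) (f n y), dist_comm (F x) (F w),
          dist_comm (F w) (f n w), dist_comm (f n w) (f n x)]
    _ < ε / 5 + ε / 5 + ε / 5 + ε / 5 + ε / 5 := by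
        gcongr
        exacts [hy.2, hfw n, hy.1 n]
    _ = ε := by ring

theorem equicontinuousAt_of_norm_le {ι : Type*} {f : ι → ℂ → ℂ} {c : ℂ} {R M : ℝ} (hR : 0 < R)
    (hf : ∀ n, DifferentiableOn ℂ (f n) (Metric.ball c R))
    (hM : ∀ n, ∀ z ∈ Metric.ball c R, ‖f n z‖ ≤ M) : EquicontinuousAt f c := by
  refine Metric.equicontinuousAt_of_continuity_modulus
    (fun z => 2 * M / R * dist z c) ?_ f ?_
  · exact Continuous.tendsto' (by fun_prop) c 0 (by rw [dist_self, mul_zero])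
  filter_upwards [Metric.ball_mem_nhds c hR] with z hz n
  rw [dist_comm]
  refine Complex.dist_le_div_mul_dist_of_mapsTo_ball (hf n) (fun w hw => ?_) hz
  rw [Metric.mem_closedBall, dist_eq_norm]
  linarith [norm_sub_le (f n w) (f n c), hM n w hw, hM n c (Metric.mem_ball_self hR)]

theorem tendstoLocallyUniformlyOn_of_locally_bounded_of_dense {ι : Type*} {l : Filter ι}
    {f : ι → ℂ → ℂ} {F : ℂ → ℂ} {U D : Set ℂ} (hU : IsOpen U)
    (hf : ∀ n, DifferentiableOn ℂ (f n) U) (hF : ContinuousOn F U)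
    (hbdd : ∀ c ∈ U, ∃ M, ∀ᶠ z in nhds c, ∀ n, ‖f n z‖ ≤ M) (hD : Dense D)
    (hlim : ∀ z ∈ U ∩ D, Tendsto (fun n => f n z) l (nhds (F z))) :
    TendstoLocallyUniformlyOn f F l U := by
  rw [Metric.tendstoLocallyUniformlyOn_iff]
  intro ε hε c hc
  obtain ⟨M, hM⟩ := hbdd c hc
  obtain ⟨R, hR, hball⟩ := Metric.eventually_nhds_iff_ball.1 (hM.and (hU.mem_nhds hc))
  have hequi : EquicontinuousAt f c :=
    equicontinuousAt_of_norm_le hR (fun n => (hf n).mono fun z hz => (hball z hz).2)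
      fun n z hz => (hball z hz).1 n
  have hfreq : ∃ᶠ z in nhds c, Tendsto (fun n => f n z) l (nhds (F z)) :=
    ((mem_closure_iff_frequently.1 (hD c)).and_eventually (hU.mem_nhds hc)).mono
      fun z hz => hlim z ⟨hz.2, hz.1⟩
  obtain ⟨t, ht, h⟩ := exists_mem_nhds_eventually_dist_lt_of_equicontinuousAt hequi
    (hF.continuousAt (hU.mem_nhds hc)) hfreq hε
  exact ⟨t, mem_nhdsWithin_of_mem_nhds ht, h⟩

end Vitali

section ExteriorMap

theorem compl_segIcc_eq :
    segIccᶜ = {z : ℂ | 0 < z.im} ∪ {z | 1 < z.re} ∪ {z | z.im < 0} ∪ {z | z.re < -1} := by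
  ext z
  rw [Set.mem_compl_iff, mem_segIcc]
  simp only [Set.mem_Icc, Set.mem_union, Set.mem_ofPred_eq]
  grind

theorem isPreconnected_compl_segIcc : IsPreconnected segIccᶜ := by
  have hright := (convex_halfSpace_im_gt 0).isPreconnected.union (2 + Complex.I) (by simp)
    (by simp) (convex_halfSpace_re_gt 1).isPreconnected
  have hlower := hright.union (2 - Complex.I) (by right; simp) (by simp)
    (convex_halfSpace_im_lt 0).isPreconnected
  have hleft := hlower.union (-2 + Complex.I) (by left; left; simp) (by simp)
    (convex_halfSpace_re_lt (-1)).isPreconnected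
  rwa [compl_segIcc_eq]

theorem dense_im_ne_zero : Dense {z : ℂ | z.im ≠ 0} :=
  (dense_compl_singleton (0 : ℝ)).preimage Complex.isOpenMap_im

/-- The branch `φ z = z + √(z² - 1)` of the inverse Joukowski map sending `ℂ ∖ [-1, 1]` to the
exterior of the unit disc. -/
structure IsExteriorJoukowski (φ : ℂ → ℂ) : Prop where
  continuousOn : ContinuousOn φ segIccᶜ
  sq_eq : ∀ z ∉ segIcc, (φ z - z) ^ 2 = z ^ 2 - 1
  one_lt_norm : ∀ z ∉ segIcc, 1 < ‖φ z‖

theorem ne_zero_of_sub_sq_eq {R : Type*} [CommRing R] [Nontrivial R] {w z : R}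
    (h : (w - z) ^ 2 = z ^ 2 - 1) : w ≠ 0 := by
  rintro rfl
  exact one_ne_zero (by linear_combination h : (1 : R) = 0)

theorem eq_add_inv_div_two_of_sub_sq_eq {F : Type*} [Field F] [NeZero (2 : F)] {w z : F}
    (h : (w - z) ^ 2 = z ^ 2 - 1) : z = (w + w⁻¹) / 2 := by
  have hw : w ≠ 0 := ne_zero_of_sub_sq_eq h
  have h2 : (2 : F) ≠ 0 := NeZero.ne 2
  field_simp
  linear_combination -h

theorem add_inv_div_two_mem_segIcc {w : ℂ} (hw : ‖w‖ = 1) : (w + w⁻¹) / 2 ∈ segIcc := by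
  have hre := Complex.abs_re_le_norm w
  rw [hw, abs_le] at hre
  refine ⟨w.re, hre, ?_⟩
  rw [Complex.inv_eq_conj hw, Complex.add_conj, Complex.ofReal_mul, Complex.ofReal_ofNat,
    mul_div_cancel_left₀ _ two_ne_zero]

namespace IsExteriorJoukowski

variable {φ : ℂ → ℂ} {z w : ℂ}

-- On the connected set `ℂ ∖ [-1, 1]` the continuous function `‖φ‖` cannot take the value `1`.
theorem of_continuousOn (hcont : ContinuousOn φ segIccᶜ)
    (hsq : ∀ z ∉ segIcc, (φ z - z) ^ 2 = z ^ 2 - 1) {z₀ : ℂ} (hz₀ : z₀ ∉ segIcc)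
    (h₀ : 1 ≤ ‖φ z₀‖) : IsExteriorJoukowski φ := by
  refine ⟨hcont, hsq, fun z hz => not_le.1 fun hle => ?_⟩
  obtain ⟨w, hw, hw1⟩ := isPreconnected_compl_segIcc.intermediate_value
    (show z ∈ segIccᶜ from hz) (show z₀ ∈ segIccᶜ from hz₀) hcont.norm ⟨hle, h₀⟩
  refine hw ?_
  rw [eq_add_inv_div_two_of_sub_sq_eq (hsq w hw)]
  exact add_inv_div_two_mem_segIcc hw1

theorem of_eq_add_sqrt (hcont : ContinuousOn φ segIccᶜ)
    (hsq : ∀ z ∉ segIcc, (φ z - z) ^ 2 = z ^ 2 - 1)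
    (hpos : ∀ x : ℝ, 1 < x → φ x = ((x + Real.sqrt (x ^ 2 - 1) : ℝ) : ℂ)) :
    IsExteriorJoukowski φ := by
  refine of_continuousOn (z₀ := (2 : ℝ)) hcont hsq (fun h => ?_) ?_
  · exact absurd (mem_segIcc.1 h).2.2 (by norm_num)
  · rw [hpos 2 one_lt_two, Complex.norm_real]
    exact le_trans (by linarith [Real.sqrt_nonneg ((2 : ℝ) ^ 2 - 1)]) (le_abs_self _)

theorem ne_zero (hφ : IsExteriorJoukowski φ) (hz : z ∉ segIcc) : φ z ≠ 0 :=
  ne_zero_of_sub_sq_eq (hφ.sq_eq z hz)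

theorem eq_add_inv_div_two (hφ : IsExteriorJoukowski φ) (hz : z ∉ segIcc) :
    z = (φ z + (φ z)⁻¹) / 2 :=
  eq_add_inv_div_two_of_sub_sq_eq (hφ.sq_eq z hz)

theorem norm_inv_lt_one (hφ : IsExteriorJoukowski φ) (hz : z ∉ segIcc) : ‖(φ z)⁻¹‖ < 1 := by
  rw [norm_inv]
  exact inv_lt_one_of_one_lt₀ (hφ.one_lt_norm z hz)

theorem eq_of_map_eq (hφ : IsExteriorJoukowski φ) (hz : z ∉ segIcc) (hw : w ∉ segIcc)
    (h : φ z = φ w) : z = w := by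
  rw [hφ.eq_add_inv_div_two hz, hφ.eq_add_inv_div_two hw, h]

theorem im_mul_im_inv_nonpos (hφ : IsExteriorJoukowski φ) (hz : z ∉ segIcc) :
    z.im * ((φ z)⁻¹).im ≤ 0 := by
  set q := Complex.normSq (φ z) with hq
  have hq1 : q⁻¹ ≤ 1 := by
    rw [hq, Complex.normSq_eq_norm_sq]
    exact inv_le_one_of_one_le₀ (one_le_pow₀ (hφ.one_lt_norm z hz).le)
  have him : z.im = (φ z).im * (1 - q⁻¹) / 2 := by
    conv_lhs => rw [hφ.eq_add_inv_div_two hz]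
    rw [Complex.div_ofNat_im, Complex.add_im, Complex.inv_im]
    ring
  have hq0 : 0 ≤ q⁻¹ := inv_nonneg.2 (Complex.normSq_nonneg _)
  calc z.im * ((φ z)⁻¹).im = -((φ z).im ^ 2 * (1 - q⁻¹) * q⁻¹ / 2) := by
        rw [him, Complex.inv_im]; ring
    _ ≤ 0 := neg_nonpos.2 (by have := sub_nonneg.2 hq1; positivity)

theorem sub_eq (hφ : IsExteriorJoukowski φ) (hz : z ∉ segIcc) (hw : w ∉ segIcc) :
    z - w = (φ z - φ w) * (φ z * φ w - 1) / (2 * φ z * φ w) := by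
  have hφz := hφ.ne_zero hz
  have hφw := hφ.ne_zero hw
  conv_lhs => rw [hφ.eq_add_inv_div_two hz, hφ.eq_add_inv_div_two hw]
  field_simp
  ring

-- Both sides are `0` for `z = w`, the right-hand one because `x / 0 = 0`.
theorem mul_sub_div_eq (hφ : IsExteriorJoukowski φ) (hz : z ∉ segIcc) (hw : w ∉ segIcc) :
    φ w * (φ z - φ w) / (φ z * φ w - 1) = (φ z - φ w) ^ 2 / (2 * φ z * (z - w)) := by
  rcases eq_or_ne (φ z) (φ w) with h | h
  · simp [h]
  · have hφz := hφ.ne_zero hz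
    have hφw := hφ.ne_zero hw
    have hsub := sub_ne_zero.2 h
    rw [hφ.sub_eq hz hw]
    field_simp

end IsExteriorJoukowski

end ExteriorMap

section RatioAsymptotics

namespace IsOrthogonalOnSegIcc

variable {L : ℝ[X] →ₗ[ℝ] ℝ} {P : ℕ → ℝ[X]} {a b : ℕ → ℝ} {φ : ℂ → ℂ} {z : ℂ}

theorem aeval_succ_succ_div (hP : IsOrthogonalOnSegIcc L P a b) (hz : z ∉ segIcc) (n : ℕ) :
    aeval z (P (n + 2)) / aeval z (P (n + 1)) =
      z - b (n + 1) - a (n + 1) ^ 2 / (aeval z (P (n + 1)) / aeval z (P n)) := by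
  have h1 := hP.aeval_ne_zero hz (n + 1)
  rw [hP.succ_succ_eq]
  simp only [map_sub, map_mul, map_pow, aeval_X, aeval_C, Complex.coe_algebraMap]
  field_simp

theorem tendsto_recurrence_error (hP : IsOrthogonalOnSegIcc L P a b)
    (ha : Tendsto a atTop (nhds (1 / 2))) (hb : Tendsto b atTop (nhds 0)) (hz : z ∉ segIcc) :
    Tendsto (fun n => ((1 / 4 - a (n + 1) ^ 2 : ℝ) : ℂ) * (aeval z (P n) / aeval z (P (n + 1)))
      - (b (n + 1) : ℂ)) atTop (nhds 0) := by
  have ha' : Tendsto (fun n => ((1 / 4 - a (n + 1) ^ 2 : ℝ) : ℂ)) atTop (nhds 0) := by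
    have h : Tendsto (fun n => 1 / 4 - a (n + 1) ^ 2) atTop (nhds (1 / 4 - (1 / 2) ^ 2)) :=
      ((ha.comp (tendsto_add_atTop_nat 1)).pow 2).const_sub _
    norm_num at h
    exact_mod_cast h.ofReal
  have hb' : Tendsto (fun n => (b (n + 1) : ℂ)) atTop (nhds 0) := by
    exact_mod_cast (hb.comp (tendsto_add_atTop_nat 1)).ofReal
  have hbdd := isBoundedUnder_of (f := atTop) ⟨_, fun n => hP.norm_aeval_div_aeval_succ_le hz n⟩
  simpa using (ha'.zero_mul_isBoundedUnder_le hbdd).sub hb'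

theorem abs_im_le_norm_aeval_succ_div_sub (hP : IsOrthogonalOnSegIcc L P a b)
    (hφ : IsExteriorJoukowski φ) (hz : z ∉ segIcc) (n : ℕ) :
    |z.im| ≤ ‖aeval z (P (n + 1)) / aeval z (P n) - (φ z)⁻¹ / 2‖ := by
  set g := aeval z (P (n + 1)) / aeval z (P n)
  have him : (g - (φ z)⁻¹ / 2).im = g.im - ((φ z)⁻¹).im / 2 := by
    rw [Complex.sub_im, Complex.div_ofNat_im]
  have hmul : z.im ^ 2 ≤ z.im * (g - (φ z)⁻¹ / 2).im := by
    rw [him]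
    linarith [hP.im_sq_le_im_mul_im_aeval_succ_div hz n, hφ.im_mul_im_inv_nonpos hz]
  have habs : |z.im| * |z.im| ≤ |z.im| * |(g - (φ z)⁻¹ / 2).im| := by
    rw [abs_mul_abs_self, ← pow_two, ← abs_mul]
    exact hmul.trans (le_abs_self _)
  rcases (abs_nonneg z.im).eq_or_lt with h0 | hpos
  · exact h0 ▸ norm_nonneg _
  · exact (le_of_mul_le_mul_left habs hpos).trans (Complex.abs_im_le_norm _)

theorem tendsto_aeval_succ_div (hP : IsOrthogonalOnSegIcc L P a b)
    (ha : Tendsto a atTop (nhds (1 / 2))) (hb : Tendsto b atTop (nhds 0))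
    (hφ : IsExteriorJoukowski φ) (hz : z.im ≠ 0) :
    Tendsto (fun n => aeval z (P (n + 1)) / aeval z (P n)) atTop (nhds (φ z / 2)) := by
  have hz' : z ∉ segIcc := fun h => hz (mem_segIcc.1 h).1
  have hφz := hφ.ne_zero hz'
  have hlt : ‖(φ z)⁻¹ / 2‖ < ‖φ z / 2‖ := by
    rw [norm_div, norm_div]
    exact div_lt_div_of_pos_right ((hφ.norm_inv_lt_one hz').trans (hφ.one_lt_norm z hz'))
      (norm_pos_iff.2 two_ne_zero)
  refine tendsto_of_perturbed_moebius hlt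
    (fun n => div_ne_zero (hP.aeval_ne_zero hz' _) (hP.aeval_ne_zero hz' _)) (abs_pos.2 hz)
    (hP.abs_im_le_norm_aeval_succ_div_sub hφ hz') (fun n => ?_)
    (hP.tendsto_recurrence_error ha hb hz')
  have hprod : φ z / 2 * ((φ z)⁻¹ / 2) = 1 / 4 := by field_simp; norm_num
  rw [hP.aeval_succ_succ_div hz', hprod, ← add_div, ← hφ.eq_add_inv_div_two hz',
    ← inv_div (aeval z (P (n + 1)))]
  push_cast
  ring

theorem tendstoLocallyUniformlyOn_aeval_div_succ (hP : IsOrthogonalOnSegIcc L P a b)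
    (ha : Tendsto a atTop (nhds (1 / 2))) (hb : Tendsto b atTop (nhds 0))
    (hφ : IsExteriorJoukowski φ) :
    TendstoLocallyUniformlyOn (fun n z => aeval z (P n) / aeval z (P (n + 1)))
      (fun z => 2 / φ z) atTop segIccᶜ := by
  refine tendstoLocallyUniformlyOn_of_locally_bounded_of_dense isOpen_compl_segIcc
    (fun n => ?_) (continuousOn_const.div hφ.continuousOn fun z hz => hφ.ne_zero hz)
    (fun c hc => ?_) dense_im_ne_zero (fun z hz => ?_)
  · exact (P n).differentiable_aeval.differentiableOn.div
      (P (n + 1)).differentiable_aeval.differentiableOn fun z hz => hP.aeval_ne_zero hz _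
  · set δ := Metric.infDist c segIcc
    have hδ : 0 < δ := infDist_segIcc_pos hc
    refine ⟨(δ / 2)⁻¹, ?_⟩
    filter_upwards [(Metric.continuous_infDist_pt segIcc).continuousAt.eventually
      (lt_mem_nhds (half_lt_self hδ)), isOpen_compl_segIcc.mem_nhds hc] with z hzδ hz n
    exact (hP.norm_aeval_div_aeval_succ_le hz n).trans (inv_anti₀ (half_pos hδ) hzδ.le)
  · have h := (hP.tendsto_aeval_succ_div ha hb hφ hz.2).inv₀
      (div_ne_zero (hφ.ne_zero hz.1) two_ne_zero)
    simpa only [inv_div] using h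

end IsOrthogonalOnSegIcc

end RatioAsymptotics

section GaussLucas

theorem exists_norm_eq_one_forall_infDist_le_inner {E : Type*} [NormedAddCommGroup E]
    [InnerProductSpace ℝ E] {K : Set E} (hK : IsComplete K) (hconv : Convex ℝ K)
    (hne : K.Nonempty) {z : E} (hz : z ∉ K) :
    ∃ u : E, ‖u‖ = 1 ∧ ∀ w ∈ K, Metric.infDist z K ≤ inner ℝ u (z - w) := by
  obtain ⟨v, hv, hmin⟩ := exists_norm_eq_iInf_of_complete_convex hne hK hconv z
  have hobtuse := (norm_eq_iInf_iff_real_inner_le_zero hconv hv).1 hmin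
  have hpos : 0 < ‖z - v‖ := norm_pos_iff.2 (sub_ne_zero.2 (ne_of_mem_of_not_mem hv hz).symm)
  refine ⟨‖z - v‖⁻¹ • (z - v), ?_, fun w hw => ?_⟩
  · rw [norm_smul, norm_inv, norm_norm, inv_mul_cancel₀ hpos.ne']
  have hinner : ‖z - v‖ ^ 2 ≤ inner ℝ (z - v) (z - w) := by
    rw [← sub_sub_sub_cancel_right z w v, inner_sub_right, real_inner_self_eq_norm_sq]
    linarith [hobtuse w hw]
  calc Metric.infDist z K ≤ ‖z - v‖ := by
        rw [← dist_eq_norm]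
        exact Metric.infDist_le_dist_of_mem hv
    _ = ‖z - v‖⁻¹ * ‖z - v‖ ^ 2 := by field_simp
    _ ≤ inner ℝ (‖z - v‖⁻¹ • (z - v)) (z - w) := by
        rw [real_inner_smul_left]
        gcongr

theorem re_mul_inv_eq_inner_div (u w : ℂ) : (u * w⁻¹).re = inner ℝ u w / ‖w‖ ^ 2 := by
  rw [Complex.inner, Complex.inv_def, Complex.normSq_eq_norm_sq, ← mul_assoc,
    Complex.re_mul_ofReal, div_eq_mul_inv]
  simp only [Complex.mul_re, Complex.conj_re, Complex.conj_im]
  ring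

variable {K : Set ℂ}

theorem natDegree_mul_infDist_le (hK : IsClosed K) (hconv : Convex ℝ K) (hne : K.Nonempty)
    {p : ℂ[X]} (hp : ∀ w ∉ K, p.eval w ≠ 0) {z : ℂ} (hz : z ∉ K) {R : ℝ}
    (hR : ∀ w ∈ K, ‖z - w‖ ≤ R) :
    p.natDegree * Metric.infDist z K ≤ R ^ 2 * ‖(derivative p).eval z / p.eval z‖ := by
  obtain ⟨u, hu, hsep⟩ :=
    exists_norm_eq_one_forall_infDist_le_inner hK.isComplete hconv hne hz
  have hroot (w : ℂ) (hw : w ∈ p.roots) :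
      Metric.infDist z K / R ^ 2 ≤ (u * (1 / (z - w))).re := by
    have hwK : w ∈ K := by_contra fun h => hp w h (isRoot_of_mem_roots hw)
    have hzw : 0 < ‖z - w‖ := norm_pos_iff.2 (sub_ne_zero.2 (ne_of_mem_of_not_mem hwK hz).symm)
    rw [one_div, re_mul_inv_eq_inner_div]
    exact div_le_div₀ (Metric.infDist_nonneg.trans (hsep w hwK)) (hsep w hwK) (by positivity)
      (by gcongr; exact hR w hwK)
  have hsum : p.natDegree * (Metric.infDist z K / R ^ 2) ≤
      (u * ((derivative p).eval z / p.eval z)).re := by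
    rw [(IsAlgClosed.splits p).eval_derivative_div_eval_of_ne_zero (hp z hz),
      (IsAlgClosed.splits p).natDegree_eq_card_roots, ← Multiset.sum_map_mul_left,
      ← Complex.coe_reAddGroupHom, map_multiset_sum, Multiset.map_map, ← nsmul_eq_mul,
      ← Multiset.card_map (Complex.reAddGroupHom ∘ fun w => u * (1 / (z - w)))]
    exact Multiset.card_nsmul_le_sum (Multiset.forall_mem_map_iff.2 hroot)
  have hnorm : (u * ((derivative p).eval z / p.eval z)).re ≤
      ‖(derivative p).eval z / p.eval z‖ := by
    simpa only [norm_mul, hu, one_mul] using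
      Complex.re_le_norm (u * ((derivative p).eval z / p.eval z))
  obtain ⟨w, hw⟩ := hne
  have hRpos : 0 < R :=
    (norm_pos_iff.2 (sub_ne_zero.2 (ne_of_mem_of_not_mem hw hz).symm)).trans_le (hR w hw)
  rw [mul_div_assoc', div_le_iff₀' (by positivity)] at hsum
  exact hsum.trans (by gcongr)

theorem eval_derivative_ne_zero (hK : IsCompact K) (hconv : Convex ℝ K) (hne : K.Nonempty)
    {p : ℂ[X]} (hp : ∀ w ∉ K, p.eval w ≠ 0) (hdeg : 0 < p.natDegree) {z : ℂ} (hz : z ∉ K) :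
    (derivative p).eval z ≠ 0 := by
  intro h0
  obtain ⟨R, hR⟩ := hK.exists_bound_of_continuousOn (f := fun w => z - w) (by fun_prop)
  have hle := natDegree_mul_infDist_le hK.isClosed hconv hne hp hz hR
  rw [h0, zero_div, norm_zero, mul_zero] at hle
  have hpos := (hK.isClosed.notMem_iff_infDist_pos hne).1 hz
  exact hle.not_gt (by positivity)

variable {q : ℕ → ℂ[X]} {F : ℂ → ℂ}

theorem tendstoLocallyUniformlyOn_eval_div_eval_derivative (hK : IsCompact K) (hconv : Convex ℝ K)
    (hne : K.Nonempty) (hq : ∀ᶠ n in atTop, ∀ w ∉ K, (q n).eval w ≠ 0)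
    (hdeg : Tendsto (fun n => (q n).natDegree) atTop atTop) :
    TendstoLocallyUniformlyOn (fun n z => (q n).eval z / (derivative (q n)).eval z) 0 atTop Kᶜ := by
  rw [Metric.tendstoLocallyUniformlyOn_iff]
  intro ε hε c hc
  set δ := Metric.infDist c K
  have hδ : 0 < δ := (hK.isClosed.notMem_iff_infDist_pos hne).1 hc
  obtain ⟨R, hR⟩ := hK.exists_bound_of_continuousOn (f := fun w => c - w) (by fun_prop)
  have hnear : ∀ᶠ z in nhds c, δ / 2 < Metric.infDist z K ∧ z ∈ Metric.ball c 1 ∩ Kᶜ :=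
    ((Metric.continuous_infDist_pt K).continuousAt.eventually
      (lt_mem_nhds (half_lt_self hδ))).and
      (inter_mem (Metric.ball_mem_nhds c one_pos) (hK.isClosed.isOpen_compl.mem_nhds hc))
  refine ⟨_, mem_nhdsWithin_of_mem_nhds hnear, ?_⟩
  have hlarge : ∀ᶠ n in atTop, (R + 1) ^ 2 / (ε * (δ / 2)) < (q n).natDegree :=
    (tendsto_natCast_atTop_atTop.comp hdeg).eventually_gt_atTop _
  filter_upwards [hq, hlarge, hdeg.eventually_gt_atTop 0] with n hn hnR hdegn z hz
  obtain ⟨hzδ, hz1, hzK⟩ := hz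
  have hR' (w : ℂ) (hw : w ∈ K) : ‖z - w‖ ≤ R + 1 := by
    rw [Metric.mem_ball, dist_eq_norm] at hz1
    linarith [norm_sub_le_norm_sub_add_norm_sub z c w, hR w hw]
  have hle := natDegree_mul_infDist_le hK.isClosed hconv hne hn hzK hR'
  have hquot : 0 < ‖(q n).eval z / (derivative (q n)).eval z‖ := norm_pos_iff.2
    (div_ne_zero (hn z hzK) (eval_derivative_ne_zero hK hconv hne hn hdegn hzK))
  rw [← inv_div, norm_inv, ← div_eq_mul_inv, le_div_iff₀ hquot] at hle
  rw [Pi.zero_apply, dist_zero_left]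
  rw [div_lt_iff₀ (by positivity)] at hnR
  refine lt_of_mul_lt_mul_left (a := (q n).natDegree * Metric.infDist z K) ?_
    (by positivity [Metric.infDist_nonneg (x := z) (s := K)])
  calc _ ≤ (R + 1) ^ 2 := hle
    _ < (q n).natDegree * (ε * (δ / 2)) := hnR
    _ ≤ (q n).natDegree * (ε * Metric.infDist z K) := by gcongr
    _ = (q n).natDegree * Metric.infDist z K * ε := by ring

theorem eventually_eval_derivative_ne_zero (hK : IsCompact K) (hconv : Convex ℝ K)
    (hne : K.Nonempty) (hq : ∀ᶠ n in atTop, ∀ w ∉ K, (q n).eval w ≠ 0)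
    (hdeg : Tendsto (fun n => (q n).natDegree) atTop atTop) :
    ∀ᶠ n in atTop, ∀ w ∉ K, (derivative (q n)).eval w ≠ 0 := by
  filter_upwards [hq, hdeg.eventually_gt_atTop 0] with n hn hpos w hw
  exact eval_derivative_ne_zero hK hconv hne hn hpos hw

theorem tendsto_natDegree_derivative_atTop
    (hdeg : Tendsto (fun n => (q n).natDegree) atTop atTop) :
    Tendsto (fun n => (derivative (q n)).natDegree) atTop atTop := by
  simp only [natDegree_derivative]
  exact (tendsto_sub_atTop_nat 1).comp hdeg

theorem tendstoLocallyUniformlyOn_eval_derivative_div_succ (hK : IsCompact K) (hconv : Convex ℝ K)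
    (hne : K.Nonempty) (hq : ∀ᶠ n in atTop, ∀ w ∉ K, (q n).eval w ≠ 0)
    (hdeg : Tendsto (fun n => (q n).natDegree) atTop atTop)
    (hlim : TendstoLocallyUniformlyOn (fun n z => (q n).eval z / (q (n + 1)).eval z) F atTop Kᶜ) :
    TendstoLocallyUniformlyOn
      (fun n z => (derivative (q n)).eval z / (derivative (q (n + 1))).eval z) F atTop Kᶜ := by
  have hU := hK.isClosed.isOpen_compl
  have hq1 := (tendsto_add_atTop_nat 1).eventually hq
  have hdiff : ∀ᶠ n in atTop,
      DifferentiableOn ℂ (fun z => (q n).eval z / (q (n + 1)).eval z) Kᶜ :=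
    hq1.mono fun n hn => (q n).differentiable.differentiableOn.div
      (q (n + 1)).differentiable.differentiableOn hn
  have hquot := tendstoLocallyUniformlyOn_eval_div_eval_derivative (q := fun n => q (n + 1))
    hK hconv hne hq1 (hdeg.comp (tendsto_add_atTop_nat 1))
  have hsum := hlim.add ((hlim.deriv hdiff hU).mul₀ hquot
    ((hlim.differentiableOn hdiff hU).deriv hU).continuousOn continuousOn_const)
  have hF : TendstoLocallyUniformlyOn _ F atTop Kᶜ := hsum.congr_right fun z _ => by simp
  rw [tendstoLocallyUniformlyOn_iff_forall_isCompact hU] at hF ⊢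
  intro T hT hTc
  refine (hF T hT hTc).congr ?_
  filter_upwards [hq1, (tendsto_add_atTop_nat 1).eventually
    (eventually_eval_derivative_ne_zero hK hconv hne hq hdeg)] with n hn hn' z hz
  have h0 := hn z (hT hz)
  have h1 := hn' z (hT hz)
  have hderiv : HasDerivAt (fun z => (q n).eval z / (q (n + 1)).eval z) _ z :=
    ((q n).hasDerivAt z).fun_div ((q (n + 1)).hasDerivAt z) h0
  simp only [Pi.add_apply, Pi.mul_apply, Function.comp, hderiv.deriv]
  field_simp
  ring

theorem eventually_eval_iterate_derivative_ne_zero (hK : IsCompact K) (hconv : Convex ℝ K)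
    (hne : K.Nonempty) (hq : ∀ᶠ n in atTop, ∀ w ∉ K, (q n).eval w ≠ 0)
    (hdeg : Tendsto (fun n => (q n).natDegree) atTop atTop) (d : ℕ) :
    ∀ᶠ n in atTop, ∀ w ∉ K, (derivative^[d] (q n)).eval w ≠ 0 := by
  induction d generalizing q with
  | zero => exact hq
  | succ _ ih =>
    exact ih (q := fun n => derivative (q n))
      (eventually_eval_derivative_ne_zero hK hconv hne hq hdeg)
      (tendsto_natDegree_derivative_atTop hdeg)

theorem tendstoLocallyUniformlyOn_eval_iterate_derivative_div_succ (hK : IsCompact K)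
    (hconv : Convex ℝ K) (hne : K.Nonempty) (hq : ∀ᶠ n in atTop, ∀ w ∉ K, (q n).eval w ≠ 0)
    (hdeg : Tendsto (fun n => (q n).natDegree) atTop atTop)
    (hlim : TendstoLocallyUniformlyOn (fun n z => (q n).eval z / (q (n + 1)).eval z) F atTop Kᶜ)
    (d : ℕ) :
    TendstoLocallyUniformlyOn
      (fun n z => (derivative^[d] (q n)).eval z / (derivative^[d] (q (n + 1))).eval z)
      F atTop Kᶜ := by
  induction d generalizing q with
  | zero => exact hlim
  | succ _ ih =>
    exact ih (q := fun n => derivative (q n))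
      (eventually_eval_derivative_ne_zero hK hconv hne hq hdeg)
      (tendsto_natDegree_derivative_atTop hdeg)
      (tendstoLocallyUniformlyOn_eval_derivative_div_succ hK hconv hne hq hdeg hlim)

end GaussLucas

section Cauchy

section Lagrange

variable {F ι : Type*} [Field F] [Fintype ι] {x y v : ι → F}

/-- The numerator of the rational function `∑ j, v j / (X - y j)` over the common denominator
`∏ j, (X - y j)`. -/
def partialFractionNumerator (y v : ι → F) : F[X] :=
  Lagrange.interpolate Finset.univ y fun j => v j / Lagrange.nodalWeight Finset.univ y j

theorem eval_partialFractionNumerator (hy : Function.Injective y) {w : F} (hw : ∀ j, w ≠ y j) :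
    (partialFractionNumerator y v).eval w = (∏ j, (w - y j)) * ∑ j, v j / (w - y j) := by
  rw [partialFractionNumerator, Lagrange.eval_interpolate_not_at_node _ fun j _ => hw j,
    Lagrange.eval_nodal]
  congr 1
  refine Finset.sum_congr rfl fun j _ => ?_
  have := Lagrange.nodalWeight_ne_zero hy.injOn (Finset.mem_univ j)
  field_simp

theorem degree_partialFractionNumerator_lt (hy : Function.Injective y) :
    (partialFractionNumerator y v).degree < Fintype.card ι :=
  Lagrange.degree_interpolate_lt _ hy.injOn

theorem eq_zero_of_sum_div_sub_eq_zero (hx : Function.Injective x) (hy : Function.Injective y)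
    (hxy : ∀ i j, x i ≠ y j) (hv : ∀ i, ∑ j, v j / (x i - y j) = 0) : v = 0 := by
  have hzero : partialFractionNumerator y v = 0 := by
    refine eq_zero_of_degree_lt_of_eval_index_eq_zero Finset.univ hx.injOn
      (degree_partialFractionNumerator_lt hy) fun i _ => ?_
    rw [eval_partialFractionNumerator hy (hxy i), hv i, mul_zero]
  ext j
  have hj : v j / Lagrange.nodalWeight Finset.univ y j = 0 := by
    rw [← Lagrange.eval_interpolate_at_node
      (fun j => v j / Lagrange.nodalWeight Finset.univ y j) hy.injOn (Finset.mem_univ j)]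
    exact (congrArg (eval (y j)) hzero).trans eval_zero
  exact (div_eq_zero_iff.1 hj).resolve_right
    (Lagrange.nodalWeight_ne_zero hy.injOn (Finset.mem_univ j))

-- The two sides differ by a polynomial of degree below `card ι` which vanishes at every `x i`.
theorem nodal_sub_partialFractionNumerator (hx : Function.Injective x) (hy : Function.Injective y)
    (hxy : ∀ i j, x i ≠ y j) (hv : ∀ i, ∑ j, v j / (x i - y j) = 1) :
    Lagrange.nodal Finset.univ y - partialFractionNumerator y v =
      Lagrange.nodal Finset.univ x := by
  refine eq_of_degree_sub_lt_of_eval_index_eq Finset.univ hx.injOn ?_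
    fun i _ => ?_
  · have hnodal : (Lagrange.nodal Finset.univ y - Lagrange.nodal Finset.univ x).degree <
        Fintype.card ι := by
      rw [← Finset.card_univ, ← Lagrange.degree_nodal (v := y)]
      refine degree_sub_lt_left ?_ Lagrange.nodal_ne_zero ?_
      · rw [Lagrange.degree_nodal, Lagrange.degree_nodal]
      · rw [Lagrange.nodal_monic.leadingCoeff, Lagrange.nodal_monic.leadingCoeff]
    rw [sub_right_comm]
    exact (degree_sub_le _ _).trans_lt (max_lt hnodal (degree_partialFractionNumerator_lt hy))
  · rw [eval_sub, eval_partialFractionNumerator hy (hxy i), hv i, Lagrange.eval_nodal, mul_one,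
      sub_self, Lagrange.eval_nodal_at_node (Finset.mem_univ i)]

theorem one_sub_sum_div_sub (hx : Function.Injective x) (hy : Function.Injective y)
    (hxy : ∀ i j, x i ≠ y j) (hv : ∀ i, ∑ j, v j / (x i - y j) = 1) {w : F} (hw : ∀ j, w ≠ y j) :
    1 - ∑ j, v j / (w - y j) = ∏ j, (w - x j) / (w - y j) := by
  have heval := congrArg (eval w) (nodal_sub_partialFractionNumerator hx hy hxy hv)
  rw [eval_sub, eval_partialFractionNumerator hy hw, Lagrange.eval_nodal, Lagrange.eval_nodal]
    at heval
  rw [Finset.prod_div_distrib,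
    eq_div_iff (Finset.prod_ne_zero_iff.2 fun j _ => sub_ne_zero.2 (hw j)), ← heval]
  ring

end Lagrange

variable {F ι : Type*} [Field F]

theorem div_mul_sub_one_eq_mul_inv_div {f : F} (hf : f ≠ 0) (ξ w : F) :
    ξ / (w * f - 1) = ξ * f⁻¹ / (w - f⁻¹) := by
  rw [show w * f - 1 = (w - f⁻¹) * f by field_simp, div_mul_eq_div_div_swap, div_eq_mul_inv ξ]

variable [Fintype ι] {f ξ : ι → F}

theorem det_inv_mul_sub_one_ne_zero [DecidableEq ι] (hf : Function.Injective f)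
    (hf0 : ∀ j, f j ≠ 0) (hmul : ∀ i j, f i * f j ≠ 1) :
    (Matrix.of fun i j => (f i * f j - 1)⁻¹).det ≠ 0 := by
  intro hdet
  obtain ⟨ξ, hξ0, hξ⟩ := Matrix.exists_mulVec_eq_zero_iff.2 hdet
  have hzero : (fun j => ξ j * (f j)⁻¹) = 0 := by
    refine eq_zero_of_sum_div_sub_eq_zero hf (inv_injective.comp hf)
      (fun i j h => hmul i j ((mul_eq_one_iff_eq_inv₀ (hf0 j)).2 h)) fun i => ?_
    simp only [Function.comp, ← div_mul_sub_one_eq_mul_inv_div (hf0 _)]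
    simpa [Matrix.mulVec, dotProduct, div_eq_inv_mul] using congrFun hξ i
  exact hξ0 (funext fun j => (mul_eq_zero.1 (congrFun hzero j)).resolve_right (inv_ne_zero (hf0 j)))

theorem one_sub_sum_div_mul_sub_one (hf : Function.Injective f) (hf0 : ∀ j, f j ≠ 0)
    (hmul : ∀ i j, f i * f j ≠ 1) (hξ : ∀ i, ∑ j, ξ j / (f i * f j - 1) = 1) {w : F}
    (hw : ∀ j, w * f j ≠ 1) :
    1 - ∑ j, ξ j / (w * f j - 1) = ∏ j, f j * (w - f j) / (w * f j - 1) := by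
  simp only [div_mul_sub_one_eq_mul_inv_div (hf0 _)] at hξ ⊢
  rw [one_sub_sum_div_sub (y := fun j => (f j)⁻¹) hf (inv_injective.comp hf)
    (fun i j h => hmul i j ((mul_eq_one_iff_eq_inv₀ (hf0 j)).2 h)) hξ
    fun j h => hw j ((mul_eq_one_iff_eq_inv₀ (hf0 j)).2 h)]
  refine Finset.prod_congr rfl fun j _ => ?_
  rw [mul_right_comm, mul_inv_cancel₀ (hf0 j), one_mul]

end Cauchy

theorem tendsto_of_mulVec_eq {κ ι 𝕜 : Type*} [Field 𝕜] [TopologicalSpace 𝕜]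
    [IsTopologicalDivisionRing 𝕜] [T1Space 𝕜] [Fintype ι] [DecidableEq ι] {l : Filter κ}
    {A : κ → Matrix ι ι 𝕜} {M : Matrix ι ι 𝕜} (hA : Tendsto A l (nhds M)) (hM : M.det ≠ 0)
    {x : κ → ι → 𝕜} {b : ι → 𝕜} (hx : ∀ᶠ n in l, (A n).mulVec (x n) = b) :
    Tendsto x l (nhds (M⁻¹.mulVec b)) := by
  have hinv : ContinuousAt Inv.inv M := by
    refine continuousAt_matrix_inv M ?_
    rw [Ring.inverse_eq_inv']
    exact continuousAt_inv₀ hM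
  have hdet : ∀ᶠ n in l, (A n).det ≠ 0 :=
    ((continuous_id.matrix_det.tendsto M).comp hA).eventually_ne hM
  have hlim : Tendsto (fun n => (A n)⁻¹.mulVec b) l (nhds (M⁻¹.mulVec b)) :=
    ((continuous_id.matrix_mulVec continuous_const).tendsto M⁻¹).comp (hinv.tendsto.comp hA)
  refine hlim.congr' ?_
  filter_upwards [hx, hdet] with n hn hd
  rw [← hn, Matrix.mulVec_mulVec, Matrix.nonsing_inv_mul _ (isUnit_iff_ne_zero.2 hd),
    Matrix.one_mulVec]

theorem tendstoUniformlyOn_finset_sum {α β κ ι : Type*} [AddCommGroup β] [UniformSpace β]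
    [IsUniformAddGroup β] {l : Filter κ} {K : Set α} {F : ι → κ → α → β} {G : ι → α → β}
    (s : Finset ι) (hF : ∀ j ∈ s, TendstoUniformlyOn (F j) (G j) l K) :
    TendstoUniformlyOn (fun n z => ∑ j ∈ s, F j n z) (fun z => ∑ j ∈ s, G j z) l K := by
  induction s using Finset.cons_induction with
  | empty =>
    simp only [Finset.sum_empty]
    exact tendsto_const_nhds.tendstoUniformlyOn_const K
  | cons i s hi ih =>
    simp only [Finset.sum_cons]
    exact (hF i (Finset.mem_cons_self i s)).add
      (ih fun j hj => hF j (Finset.mem_cons_of_mem hj))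

section FiniteRankPerturbation

variable {𝕜 ι : Type*} [NormedField 𝕜] {h u v : ℕ → 𝕜} {κ : 𝕜}

/-- The kernel sum `∑ k < n, u k * v k / h k`, measured in units of its first omitted term. Here
`u k` and `v k` stand for values of two functionals at the `k`-th orthogonal polynomial and `h k`
for its squared norm. -/
def normalizedKernel (h u v : ℕ → 𝕜) (n : ℕ) : 𝕜 :=
  (∑ k ∈ Finset.range n, u k * v k / h k) / (u n * v n / h n)

theorem mul_div_div_mul_div (a b c a' b' c' : 𝕜) :
    a * b / c / (a' * b' / c') = a / a' * (b / b' / (c / c')) := by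
  rw [div_div_div_comm, mul_div_mul_comm, mul_div_assoc]

theorem div_mul_div_div_sq (hκ : κ ≠ 0) (w f : 𝕜) : κ / w * (κ / f / κ ^ 2) = (w * f)⁻¹ := by
  rw [← mul_div_assoc, div_mul_div_comm, ← sq, div_div_cancel_left' (pow_ne_zero 2 hκ)]

theorem norm_inv_mul_lt_one {w f : 𝕜} (hw : 1 < ‖w‖) (hf : 1 < ‖f‖) : ‖(w * f)⁻¹‖ < 1 := by
  rw [norm_inv, norm_mul]
  exact inv_lt_one_of_one_lt₀ (one_lt_mul_of_lt_of_le hw hf.le)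

theorem inv_div_one_sub_inv {q : 𝕜} (hq : q ≠ 0) : q⁻¹ / (1 - q⁻¹) = (q - 1)⁻¹ := by
  rw [show 1 - q⁻¹ = q⁻¹ * (q - 1) by field_simp, div_mul_cancel_left₀ (inv_ne_zero hq)]

theorem mul_ne_one_of_one_lt_norm {w f : 𝕜} (hw : 1 < ‖w‖) (hf : 1 < ‖f‖) : w * f ≠ 1 := by
  intro hwf
  have hlt := norm_inv_mul_lt_one hw hf
  rw [hwf, inv_one, norm_one] at hlt
  exact lt_irrefl _ hlt

theorem ne_zero_of_one_lt_norm {w : 𝕜} (hw : 1 < ‖w‖) : w ≠ 0 :=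
  norm_pos_iff.1 (one_pos.trans hw)

section Limits

variable {w f : 𝕜} (hκ : κ ≠ 0) (hh : ∀ᶠ n in atTop, h n ≠ 0)
  (hhlim : Tendsto (fun n => h n / h (n + 1)) atTop (nhds (κ ^ 2)))
  (hv : ∀ᶠ n in atTop, v n ≠ 0)
  (hvlim : Tendsto (fun n => v n / v (n + 1)) atTop (nhds (κ / f))) (hf : 1 < ‖f‖)

include hκ hhlim hvlim in
theorem tendsto_mul_div_div_succ (hulim : Tendsto (fun n => u n / u (n + 1)) atTop (nhds (κ / w))) :
    Tendsto (fun n => u n * v n / h n / (u (n + 1) * v (n + 1) / h (n + 1))) atTop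
      (nhds (w * f)⁻¹) := by
  simp only [mul_div_div_mul_div, ← div_mul_div_div_sq hκ w f]
  exact hulim.mul (hvlim.div hhlim (pow_ne_zero 2 hκ))

include hκ hh hhlim hv hvlim hf in
theorem tendsto_normalizedKernel (hu : ∀ᶠ n in atTop, u n ≠ 0)
    (hulim : Tendsto (fun n => u n / u (n + 1)) atTop (nhds (κ / w))) (hw : 1 < ‖w‖) :
    Tendsto (normalizedKernel h u v) atTop (nhds (w * f - 1)⁻¹) := by
  rw [← inv_div_one_sub_inv (mul_ne_zero (ne_zero_of_one_lt_norm hw) (ne_zero_of_one_lt_norm hf))]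
  refine tendsto_sum_range_div ?_ (tendsto_mul_div_div_succ hκ hhlim hvlim hulim)
    (norm_inv_mul_lt_one hw hf)
  filter_upwards [hu, hv, hh] with n hun hvn hhn using div_ne_zero (mul_ne_zero hun hvn) hhn

include hκ hh hhlim hv hvlim hf in
theorem tendstoUniformlyOn_normalizedKernel {α : Type*} [TopologicalSpace α] {K : Set α}
    (hK : IsCompact K) {p : ℕ → α → 𝕜} {w : α → 𝕜} (hpc : ∀ n, ContinuousOn (p n) K)
    (hp : ∀ᶠ n in atTop, ∀ z ∈ K, p n z ≠ 0)
    (hplim : TendstoUniformlyOn (fun n z => p n z / p (n + 1) z) (fun z => κ / w z) atTop K)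
    (hwc : ContinuousOn w K) (hw : ∀ z ∈ K, 1 < ‖w z‖) :
    TendstoUniformlyOn (fun n z => normalizedKernel h (p · z) v n) (fun z => (w z * f - 1)⁻¹)
      atTop K := by
  have hlim : TendstoUniformlyOn
      (fun n z => p n z * v n / h n / (p (n + 1) z * v (n + 1) / h (n + 1)))
      (fun z => (w z * f)⁻¹) atTop K := by
    simp only [mul_div_div_mul_div, ← div_mul_div_div_sq hκ _ f]
    rw [← tendstoLocallyUniformlyOn_iff_tendstoUniformlyOn_of_compact hK] at hplim ⊢
    exact hplim.mul₀ ((hvlim.div hhlim (pow_ne_zero 2 hκ)).tendstoUniformlyOn_const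
      K).tendstoLocallyUniformlyOn
      (continuousOn_const.div hwc fun z hz => ne_zero_of_one_lt_norm (hw z hz)) continuousOn_const
  refine (tendstoUniformlyOn_sum_range_div hK
    (fun n => ((hpc n).mul continuousOn_const).div_const (h n)) ?_ hlim
    fun z hz => norm_inv_mul_lt_one (hw z hz) hf).congr_right fun z hz => ?_
  · filter_upwards [hp, hv, hh] with n hpn hvn hhn z hz
    exact div_ne_zero (mul_ne_zero (hpn z hz) hvn) hhn
  · exact inv_div_one_sub_inv (mul_ne_zero (ne_zero_of_one_lt_norm (hw z hz))
      (ne_zero_of_one_lt_norm hf))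

end Limits

variable [Fintype ι] {B σ : ι → ℕ → 𝕜} {η f : ι → 𝕜} {p s : ℕ → 𝕜} {n : ℕ}

/-- `s` arises from `p` by the correction formula for a perturbation of an inner product by
`∑ j, η j * ℓ j f * ℓ j g`: here `p n` and `s n` are the values of one functional at the `n`-th
original and perturbed orthogonal polynomials, `B j n` and `σ j n` those of `ℓ j`, and `h n` is the
original squared norm. -/
def IsFiniteRankPerturbation (h : ℕ → 𝕜) (B σ : ι → ℕ → 𝕜) (η : ι → 𝕜) (p s : ℕ → 𝕜) : Prop :=
  ∀ n, s n = p n - ∑ j, η j * σ j n * ∑ k ∈ Finset.range n, p k * B j k / h k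

/-- The coefficient `η j * σ j n * (B j n / h n)` of the `j`-th normalized kernel in the correction
formula `IsFiniteRankPerturbation.div_eq`. -/
def perturbationCoeff (h : ℕ → 𝕜) (B σ : ι → ℕ → 𝕜) (η : ι → 𝕜) (n : ℕ) (j : ι) : 𝕜 :=
  η j * σ j n * B j n / h n

/-- The matrix of the linear system satisfied by the coefficients `perturbationCoeff`. -/
def kernelMatrix [DecidableEq ι] (h : ℕ → 𝕜) (B : ι → ℕ → 𝕜) (η : ι → 𝕜) (n : ℕ) : Matrix ι ι 𝕜 :=
  Matrix.of (fun i j => normalizedKernel h (B i) (B j) n) +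
    Matrix.diagonal fun i => (η i)⁻¹ * (B i n * B i n / h n)⁻¹

theorem IsFiniteRankPerturbation.div_eq (hs : IsFiniteRankPerturbation h B σ η p s)
    (hp : p n ≠ 0) (hB : ∀ j, B j n ≠ 0) (hh : h n ≠ 0) :
    s n / p n = 1 - ∑ j, perturbationCoeff h B σ η n j * normalizedKernel h p (B j) n := by
  rw [hs n, sub_div, div_self hp, Finset.sum_div]
  refine congrArg (1 - ·) (Finset.sum_congr rfl fun j _ => ?_)
  have := hB j
  rw [perturbationCoeff, normalizedKernel]
  generalize ∑ k ∈ Finset.range n, p k * B j k / h k = t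
  field_simp

theorem kernelMatrix_mulVec_eq_one [DecidableEq ι]
    (hσ : ∀ i, IsFiniteRankPerturbation h B σ η (B i) (σ i))
    (hη : ∀ j, η j ≠ 0) (hB : ∀ j, B j n ≠ 0) (hh : h n ≠ 0) :
    (kernelMatrix h B η n).mulVec (perturbationCoeff h B σ η n) = 1 := by
  ext i
  have hdiag : (η i)⁻¹ * (B i n * B i n / h n)⁻¹ * perturbationCoeff h B σ η n i =
      σ i n / B i n := by
    have := hη i
    have := hB i
    rw [perturbationCoeff]
    field_simp
  rw [kernelMatrix, Matrix.add_mulVec, Pi.add_apply, Matrix.mulVec_diagonal, hdiag,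
    (hσ i).div_eq (hB i) hB hh, Pi.one_apply, Matrix.mulVec, dotProduct]
  simp only [Matrix.of_apply, mul_comm (normalizedKernel _ _ _ _), add_sub_cancel]

section Limits

variable [CompleteSpace 𝕜] (hσ : ∀ i, IsFiniteRankPerturbation h B σ η (B i) (σ i))
  (hη : ∀ j, η j ≠ 0) (hκ : κ ≠ 0) (hh : ∀ᶠ n in atTop, h n ≠ 0)
  (hhlim : Tendsto (fun n => h n / h (n + 1)) atTop (nhds (κ ^ 2)))
  (hB : ∀ j, ∀ᶠ n in atTop, B j n ≠ 0)
  (hBlim : ∀ j, Tendsto (fun n => B j n / B j (n + 1)) atTop (nhds (κ / f j)))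
  (hf : ∀ j, 1 < ‖f j‖) (hinj : Function.Injective f)

omit [Fintype ι] in
include hκ hh hhlim hB hBlim hf in
theorem tendsto_kernelMatrix [DecidableEq ι] :
    Tendsto (kernelMatrix h B η) atTop (nhds (Matrix.of fun i j => (f i * f j - 1)⁻¹)) := by
  have hdiag (i : ι) : Tendsto (fun n => (η i)⁻¹ * (B i n * B i n / h n)⁻¹) atTop (nhds 0) := by
    have hne : ∀ᶠ n in atTop, B i n * B i n / h n ≠ 0 := by
      filter_upwards [hB i, hh] with n hBn hhn using div_ne_zero (mul_ne_zero hBn hBn) hhn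
    simpa only [mul_zero] using (tendsto_inv_zero_of_tendsto_div_succ hne
      (tendsto_mul_div_div_succ hκ hhlim (hBlim i) (hBlim i))
      (norm_inv_mul_lt_one (hf i) (hf i))).const_mul (η i)⁻¹
  have hdiagonal : Tendsto (fun n => Matrix.diagonal fun i => (η i)⁻¹ * (B i n * B i n / h n)⁻¹)
      atTop (nhds 0) := by
    rw [← Matrix.diagonal_zero]
    exact (continuous_id.matrix_diagonal.tendsto 0).comp (tendsto_pi_nhds.2 hdiag)
  have hkernel : Tendsto (fun n => Matrix.of fun i j => normalizedKernel h (B i) (B j) n)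
      atTop (nhds (Matrix.of fun i j => (f i * f j - 1)⁻¹)) :=
    tendsto_pi_nhds.2 fun i => tendsto_pi_nhds.2 fun j =>
      tendsto_normalizedKernel hκ hh hhlim (hB j) (hBlim j) (hf j) (hB i) (hBlim i) (hf i)
  simpa only [add_zero] using! hkernel.add hdiagonal

include hσ hη hκ hh hhlim hB hBlim hf hinj in
theorem exists_tendsto_perturbationCoeff :
    ∃ ξ : ι → 𝕜, (∀ i, ∑ j, ξ j / (f i * f j - 1) = 1) ∧
      ∀ j, Tendsto (perturbationCoeff h B σ η · j) atTop (nhds (ξ j)) := by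
  have hdet := det_inv_mul_sub_one_ne_zero hinj (fun j => ne_zero_of_one_lt_norm (hf j))
    fun i j => mul_ne_one_of_one_lt_norm (hf i) (hf j)
  set M := Matrix.of fun i j => (f i * f j - 1)⁻¹ with hM
  refine ⟨M⁻¹.mulVec 1, fun i => ?_, tendsto_pi_nhds.1 ?_⟩
  · have hmul : M.mulVec (M⁻¹.mulVec 1) = 1 := by
      rw [Matrix.mulVec_mulVec, Matrix.mul_nonsing_inv _ (isUnit_iff_ne_zero.2 hdet),
        Matrix.one_mulVec]
    simpa only [Matrix.mulVec, dotProduct, hM, Matrix.of_apply, Pi.one_apply, ← div_eq_inv_mul]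
      using congrFun hmul i
  · refine tendsto_of_mulVec_eq
      (tendsto_kernelMatrix (η := η) hκ hh hhlim hB hBlim hf) hdet ?_
    filter_upwards [eventually_all.2 hB, hh] with n hBn hhn
    exact kernelMatrix_mulVec_eq_one hσ hη hBn hhn

include hσ hη hκ hh hhlim hB hBlim hf hinj in
theorem tendstoUniformlyOn_div_of_isFiniteRankPerturbation {α : Type*} [TopologicalSpace α]
    {K : Set α} (hK : IsCompact K) {p s : ℕ → α → 𝕜} {w : α → 𝕜}
    (hs : ∀ z ∈ K, IsFiniteRankPerturbation h B σ η (p · z) (s · z))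
    (hpc : ∀ n, ContinuousOn (p n) K) (hp : ∀ᶠ n in atTop, ∀ z ∈ K, p n z ≠ 0)
    (hplim : TendstoUniformlyOn (fun n z => p n z / p (n + 1) z) (fun z => κ / w z) atTop K)
    (hwc : ContinuousOn w K) (hw : ∀ z ∈ K, 1 < ‖w z‖) :
    TendstoUniformlyOn (fun n z => s n z / p n z)
      (fun z => ∏ j, f j * (w z - f j) / (w z * f j - 1)) atTop K := by
  obtain ⟨ξ, hξ, hξlim⟩ := exists_tendsto_perturbationCoeff hσ hη hκ hh hhlim hB hBlim hf hinj
  have hterm (j : ι) : TendstoUniformlyOn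
      (fun n z => perturbationCoeff h B σ η n j * normalizedKernel h (p · z) (B j) n)
      (fun z => ξ j * (w z * f j - 1)⁻¹) atTop K := by
    have hker := tendstoUniformlyOn_normalizedKernel hκ hh hhlim (hB j) (hBlim j) (hf j) hK hpc hp
      hplim hwc hw
    rw [← tendstoLocallyUniformlyOn_iff_tendstoUniformlyOn_of_compact hK] at hker ⊢
    exact ((hξlim j).tendstoUniformlyOn_const K).tendstoLocallyUniformlyOn.mul₀ hker
      continuousOn_const (((hwc.mul continuousOn_const).sub continuousOn_const).inv₀ fun z hz =>
        sub_ne_zero.2 (mul_ne_one_of_one_lt_norm (hw z hz) (hf j)))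
  have hone : TendstoUniformlyOn (fun (_ : ℕ) (_ : α) => (1 : 𝕜)) (fun _ => 1) atTop K :=
    tendsto_const_nhds.tendstoUniformlyOn_const K
  have hsum := hone.sub (tendstoUniformlyOn_finset_sum Finset.univ fun j _ => hterm j)
  refine (hsum.congr ?_).congr_right fun z hz => ?_
  · filter_upwards [hp, eventually_all.2 hB, hh] with n hpn hBn hhn z hz
    exact ((hs z hz).div_eq (hpn z hz) hBn hhn).symm
  · simp only [← div_eq_mul_inv]
    exact one_sub_sum_div_mul_sub_one hinj (fun j => ne_zero_of_one_lt_norm (hf j))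
      (fun i j => mul_ne_one_of_one_lt_norm (hf i) (hf j)) hξ
      fun j => mul_ne_one_of_one_lt_norm (hw z hz) (hf j)

end Limits

end FiniteRankPerturbation

section FiniteRankPerturbationOfFunctional

theorem IsMonicOrthogonal.isFiniteRankPerturbation {F 𝕜 ι : Type*} [Field F] [NormedField 𝕜]
    [Algebra F 𝕜] [Fintype ι] {L : F[X] →ₗ[F] F} {P S : ℕ → F[X]} (hP : IsMonicOrthogonal L P)
    (hL : ∀ n, L (P n * P n) ≠ 0) {ℓ : ι → F[X] →ₗ[F] F} {η : ι → F}
    (hSmonic : ∀ n, (S n).Monic) (hSdeg : ∀ n, (S n).natDegree = n)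
    (hSorth : ∀ n, ∀ m < n, L (X ^ m * S n) + ∑ j, η j * ℓ j (X ^ m) * ℓ j (S n) = 0)
    (T : F[X] →ₗ[F] 𝕜) :
    IsFiniteRankPerturbation (fun n => algebraMap F 𝕜 (L (P n * P n)))
      (fun j n => algebraMap F 𝕜 (ℓ j (P n))) (fun j n => algebraMap F 𝕜 (ℓ j (S n)))
      (fun j => algebraMap F 𝕜 (η j)) (fun n => T (P n)) (fun n => T (S n)) := by
  intro n
  have hS := congrArg T (hP.eq_sub_sum_of_finite_rank hL ℓ η (hSmonic n) (hSdeg n) (hSorth n))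
  simp only [map_sub, map_sum, map_smul] at hS
  simp only [hS, Algebra.smul_def, map_mul, map_div₀, mul_div_right_comm, mul_comm (T _)]

variable {L : ℝ[X] →ₗ[ℝ] ℝ} {P : ℕ → ℝ[X]} {a b : ℕ → ℝ} {φ : ℂ → ℂ} {z : ℂ}

/-- The functional `q ↦ q⁽ᵈ⁾(c)`. -/
def derivEval {R : Type*} [CommRing R] (c : R) (d : ℕ) : R[X] →ₗ[R] R :=
  leval c ∘ₗ derivative ^ d

theorem derivEval_apply {R : Type*} [CommRing R] (c : R) (d : ℕ) (q : R[X]) :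
    derivEval c d q = (derivative^[d] q).eval c := by
  rw [derivEval, LinearMap.comp_apply, Module.End.pow_apply, leval_apply]

theorem eval_iterate_derivative_map (c : ℝ) (d : ℕ) (q : ℝ[X]) :
    (derivative^[d] (q.map (algebraMap ℝ ℂ))).eval (c : ℂ) = algebraMap ℝ ℂ (derivEval c d q) := by
  rw [iterate_derivative_map, eval_map_algebraMap, derivEval_apply, ← Complex.coe_algebraMap,
    aeval_algebraMap_apply_eq_algebraMap_eval]

theorem IsMonicOrthogonal.tendsto_algebraMap_map_mul_self_div_succ (hP : IsMonicOrthogonal L P)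
    (hrec : ThreeTermRecurrence P a b) (hL : ∀ n, L (P n * P n) ≠ 0)
    (ha : Tendsto a atTop (nhds (1 / 2))) :
    Tendsto (fun n => algebraMap ℝ ℂ (L (P n * P n)) / algebraMap ℝ ℂ (L (P (n + 1) * P (n + 1))))
      atTop (nhds (2 ^ 2)) := by
  have hsq : Tendsto (fun n => (a (n + 1) ^ 2)⁻¹) atTop (nhds (2 ^ 2)) := by
    have hlim := ((ha.comp (tendsto_add_atTop_nat 1)).pow 2).inv₀ (by norm_num)
    rwa [one_div, inv_pow, inv_inv] at hlim
  have hcast := (Complex.continuous_ofReal.tendsto _).comp hsq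
  rw [Complex.ofReal_pow, Complex.ofReal_ofNat] at hcast
  refine hcast.congr fun n => ?_
  rw [Function.comp_apply, ← map_div₀, hP.map_mul_self_succ hrec n, div_mul_cancel_right₀ (hL n),
    Complex.coe_algebraMap]

theorem IsMonicOrthogonal.tendsto_natDegree_map (hP : IsMonicOrthogonal L P) :
    Tendsto (fun n => ((P n).map (algebraMap ℝ ℂ)).natDegree) atTop atTop := by
  simp only [natDegree_map, hP.natDegree_eq]
  exact tendsto_id

namespace IsOrthogonalOnSegIcc

theorem eval_map_ne_zero (hP : IsOrthogonalOnSegIcc L P a b) (n : ℕ) :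
    ∀ w ∉ segIcc, ((P n).map (algebraMap ℝ ℂ)).eval w ≠ 0 := fun w hw => by
  rw [eval_map_algebraMap]
  exact hP.aeval_ne_zero hw n

theorem eventually_derivEval_ne_zero (hP : IsOrthogonalOnSegIcc L P a b) {c : ℝ}
    (hc : (c : ℂ) ∉ segIcc) (d : ℕ) : ∀ᶠ n in atTop, algebraMap ℝ ℂ (derivEval c d (P n)) ≠ 0 := by
  refine (eventually_eval_iterate_derivative_ne_zero isCompact_segIcc convex_segIcc segIcc_nonempty
    (Eventually.of_forall hP.eval_map_ne_zero) hP.tendsto_natDegree_map d).mono fun n hn => ?_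
  rw [← eval_iterate_derivative_map]
  exact hn c hc

theorem tendsto_derivEval_div_succ (hP : IsOrthogonalOnSegIcc L P a b)
    (ha : Tendsto a atTop (nhds (1 / 2))) (hb : Tendsto b atTop (nhds 0))
    (hφ : IsExteriorJoukowski φ) {c : ℝ} (hc : (c : ℂ) ∉ segIcc) (d : ℕ) :
    Tendsto (fun n => algebraMap ℝ ℂ (derivEval c d (P n)) /
      algebraMap ℝ ℂ (derivEval c d (P (n + 1)))) atTop (nhds (2 / φ c)) := by
  have hlim := hP.tendstoLocallyUniformlyOn_aeval_div_succ ha hb hφ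
  simp only [← eval_map_algebraMap] at hlim
  simp only [← eval_iterate_derivative_map]
  exact (tendstoLocallyUniformlyOn_eval_iterate_derivative_div_succ isCompact_segIcc convex_segIcc
    segIcc_nonempty (Eventually.of_forall hP.eval_map_ne_zero) hP.tendsto_natDegree_map hlim
    d).tendsto_at hc

theorem tendstoLocallyUniformlyOn_aeval_div (hP : IsOrthogonalOnSegIcc L P a b)
    (ha : Tendsto a atTop (nhds (1 / 2))) (hb : Tendsto b atTop (nhds 0))
    (hφ : IsExteriorJoukowski φ) {ι : Type*} [Fintype ι] {c η : ι → ℝ} (d : ι → ℕ)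
    (hcinj : Function.Injective c) (hc : ∀ j, (c j : ℂ) ∉ segIcc) (hη : ∀ j, η j ≠ 0)
    {S : ℕ → ℝ[X]} (hSmonic : ∀ n, (S n).Monic) (hSdeg : ∀ n, (S n).natDegree = n)
    (hSorth : ∀ n, ∀ m < n, L (X ^ m * S n) +
      ∑ j, η j * derivEval (c j) (d j) (X ^ m) * derivEval (c j) (d j) (S n) = 0) :
    TendstoLocallyUniformlyOn (fun n z => aeval z (S n) / aeval z (P n))
      (fun z => ∏ j, (φ z - φ (c j)) ^ 2 / (2 * φ z * (z - c j))) atTop segIccᶜ := by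
  rw [tendstoLocallyUniformlyOn_iff_forall_isCompact isOpen_compl_segIcc]
  intro K hKsub hK
  have hL : ∀ n, L (P n * P n) ≠ 0 := fun n => hP.map_mul_self_ne_zero n
  have hrank (T : ℝ[X] →ₗ[ℝ] ℂ) := hP.isFiniteRankPerturbation hL hSmonic hSdeg hSorth T
  have hratio : TendstoUniformlyOn (fun n z => aeval z (P n) / aeval z (P (n + 1)))
      (fun z => 2 / φ z) atTop K :=
    (tendstoLocallyUniformlyOn_iff_forall_isCompact isOpen_compl_segIcc).1
      (hP.tendstoLocallyUniformlyOn_aeval_div_succ ha hb hφ) K hKsub hK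
  have hφinj : Function.Injective fun j => φ (c j) := fun i j hij =>
    hcinj (Complex.ofReal_injective (hφ.eq_of_map_eq (hc i) (hc j) hij))
  have hlim := tendstoUniformlyOn_div_of_isFiniteRankPerturbation
    (fun i => hrank (Algebra.linearMap ℝ ℂ ∘ₗ derivEval (c i) (d i)))
    (fun j => Complex.ofReal_ne_zero.2 (hη j)) two_ne_zero
    (Eventually.of_forall fun n => Complex.ofReal_ne_zero.2 (hL n))
    (hP.tendsto_algebraMap_map_mul_self_div_succ hP.toThreeTermRecurrence hL ha)
    (fun j => hP.eventually_derivEval_ne_zero (hc j) (d j))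
    (fun j => hP.tendsto_derivEval_div_succ ha hb hφ (hc j) (d j))
    (fun j => hφ.one_lt_norm _ (hc j)) hφinj hK (fun z _ => hrank (aeval z).toLinearMap)
    (fun n => (P n).continuous_aeval.continuousOn)
    (Eventually.of_forall fun n z hz => hP.aeval_ne_zero (hKsub hz) n) hratio
    (hφ.continuousOn.mono hKsub) fun z hz => hφ.one_lt_norm z (hKsub hz)
  exact hlim.congr_right fun z hz => Finset.prod_congr rfl fun j _ =>
    hφ.mul_sub_div_eq (hKsub hz) (hc j)

end IsOrthogonalOnSegIcc

end FiniteRankPerturbationOfFunctional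

section DiscreteSobolev

variable {μ : Measure ℝ} [IsFiniteMeasureOnCompacts μ]

theorem integrableOn_eval (q : ℝ[X]) : IntegrableOn (fun x => q.eval x) (Set.Icc (-1) 1) μ :=
  q.continuous.continuousOn.integrableOn_compact isCompact_Icc

variable (μ) in
/-- The moment functional `q ↦ ∫ x in [-1, 1], q x ∂μ`. -/
def integralFunctional : ℝ[X] →ₗ[ℝ] ℝ where
  toFun q := ∫ x in Set.Icc (-1 : ℝ) 1, q.eval x ∂μ
  map_add' p q := by
    simp only [eval_add]
    exact integral_add (integrableOn_eval p) (integrableOn_eval q)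
  map_smul' r q := by
    simp only [eval_smul, smul_eq_mul, integral_const_mul, RingHom.id_apply]

theorem integralFunctional_apply (q : ℝ[X]) :
    integralFunctional μ q = ∫ x in Set.Icc (-1 : ℝ) 1, q.eval x ∂μ := rfl

theorem integralFunctional_mul (p q : ℝ[X]) :
    integralFunctional μ (p * q) = ∫ x in Set.Icc (-1 : ℝ) 1, p.eval x * q.eval x ∂μ := by
  simp only [integralFunctional_apply, eval_mul]

theorem abs_integralFunctional_X_mul_le (q : ℝ[X]) :
    |integralFunctional μ (X * (q * q))| ≤ integralFunctional μ (q * q) := by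
  rw [integralFunctional_apply, integralFunctional_apply, ← Real.norm_eq_abs]
  refine norm_integral_le_of_norm_le (integrableOn_eval (q * q)) ?_
  filter_upwards [ae_restrict_mem measurableSet_Icc] with x hx
  rw [eval_mul, eval_X, Real.norm_eq_abs, abs_mul, eval_mul, abs_mul_self]
  exact mul_le_of_le_one_left (mul_self_nonneg _) (abs_le.2 hx)

theorem sobInner_eq {N : ℕ} (c : Fin N → ℝ) (d : Fin N → ℕ) (η : Fin N → ℝ) (p q : ℝ[X]) :
    sobInner μ c d η p q = integralFunctional μ (p * q) +
      ∑ j, η j * derivEval (c j) (d j) p * derivEval (c j) (d j) q := by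
  simp only [sobInner, integralFunctional_mul, derivEval_apply]

theorem SeqOrdered.injective {N : ℕ} {c : Fin N → ℝ} {d : Fin N → ℕ} (h : SeqOrdered c d) :
    Function.Injective c :=
  .of_lt_imp_ne fun i j hij hcij =>
    h.2 j <| subset_convexHull ℝ _ <| Or.inr ⟨i, hij, hcij⟩

theorem statement10_general (μ : Measure ℝ) [IsFiniteMeasureOnCompacts μ]
    (hμinf : ∀ p : Polynomial ℝ, p ≠ 0 → 0 < ∫ x in Set.Icc (-1:ℝ) 1, (p.eval x) ^ 2 ∂μ)
    {N : ℕ} (c : Fin N → ℝ) (d : Fin N → ℕ) (hcinj : Function.Injective c)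
    (hc : ∀ j, c j ∉ Set.Icc (-1:ℝ) 1) (η : Fin N → ℝ) (hη : ∀ j, η j ≠ 0)
    (S : ℕ → Polynomial ℝ)
    (hSmonic : ∀ n, (S n).Monic) (hSdeg : ∀ n, (S n).natDegree = n)
    (hSorth : ∀ n, ∀ m < n, sobInner μ c d η (X ^ m) (S n) = 0)
    (P : ℕ → Polynomial ℝ) (a b : ℕ → ℝ)
    (hPmonic : ∀ n, (P n).Monic) (hPdeg : ∀ n, (P n).natDegree = n)
    (hPorth : ∀ n, ∀ m < n, (∫ x in Set.Icc (-1:ℝ) 1, x ^ m * (P n).eval x ∂μ) = 0)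
    (hP1 : P 1 = X - C (b 0))
    (hPrec : ∀ n, P (n + 2) = (X - C (b (n + 1))) * P (n + 1) - C ((a (n + 1)) ^ 2) * P n)
    (ha : Tendsto a atTop (nhds (1 / 2))) (hb : Tendsto b atTop (nhds 0))
    (φ : ℂ → ℂ) (hφcont : ContinuousOn φ segIccᶜ)
    (hφsq : ∀ z ∉ segIcc, (φ z - z) ^ 2 = z ^ 2 - 1)
    (hφpos : ∀ x : ℝ, 1 < x → φ (x : ℂ) = ((x + Real.sqrt (x ^ 2 - 1) : ℝ) : ℂ)) :
    TendstoLocallyUniformlyOn (fun (n : ℕ) (z : ℂ) => aeval z (S n) / aeval z (P n))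
      (fun z : ℂ => ∏ j, (φ z - φ ((c j : ℝ) : ℂ)) ^ 2 / (2 * φ z * (z - ((c j : ℝ) : ℂ))))
      atTop segIccᶜ := by
  have hP : IsOrthogonalOnSegIcc (integralFunctional μ) P a b :=
    { monic := hPmonic
      natDegree_eq := hPdeg
      orthogonal := fun n m hm => by
        simpa only [integralFunctional_mul, eval_pow, eval_X] using hPorth n m hm
      one_eq := hP1
      succ_succ_eq := hPrec
      map_sq_pos := fun q hq => by
        simpa only [integralFunctional_mul, sq] using hμinf q hq
      abs_map_X_mul_le := abs_integralFunctional_X_mul_le }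
  exact hP.tendstoLocallyUniformlyOn_aeval_div ha hb (.of_eq_add_sqrt hφcont hφsq hφpos) d hcinj
    (fun j hj => hc j (ofReal_mem_segIcc.1 hj)) hη hSmonic hSdeg
    fun n m hm => (sobInner_eq c d η _ _).symm.trans (hSorth n m hm)

end DiscreteSobolev

/-- Relative asymptotics: for a sequentially-ordered discrete Sobolev
inner product with `μ` in the Nevai class `M(0,1)`,
`S_n / P_n → ∏_j (φ(z) - φ(c j))² / (2 φ(z) (z - c j))` uniformly on compact
subsets of `ℂ ∖ [-1,1]`. -/
theorem statement10
    (μ : Measure ℝ) [IsFiniteMeasure μ]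
    (hμsupp : μ (Set.Icc (-1:ℝ) 1)ᶜ = 0)
    (hμinf : ∀ p : Polynomial ℝ, p ≠ 0 → 0 < ∫ x in Set.Icc (-1:ℝ) 1, (p.eval x) ^ 2 ∂μ)
    {N : ℕ} (c : Fin N → ℝ) (d : Fin N → ℕ)
    (hc : ∀ j, c j ∉ Set.Icc (-1:ℝ) 1)
    (η : Fin N → ℝ) (hη : ∀ j, 0 < η j)
    (hseq : SeqOrdered c d)
    (S : ℕ → Polynomial ℝ)
    (hSmonic : ∀ n, (S n).Monic) (hSdeg : ∀ n, (S n).natDegree = n)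
    (hSorth : ∀ n, ∀ m < n, sobInner μ c d η (X ^ m) (S n) = 0)
    (hsupp : ∀ x ∈ Set.Icc (-1:ℝ) 1, ∀ ε > 0, 0 < μ (Metric.ball x ε))
    (P : ℕ → Polynomial ℝ) (a b : ℕ → ℝ)
    (hPmonic : ∀ n, (P n).Monic) (hPdeg : ∀ n, (P n).natDegree = n)
    (hPorth : ∀ n, ∀ m < n, (∫ x in Set.Icc (-1:ℝ) 1, x ^ m * (P n).eval x ∂μ) = 0)
    (hP0 : P 0 = 1) (hP1 : P 1 = X - C (b 0))
    (hPrec : ∀ n, P (n + 2) = (X - C (b (n + 1))) * P (n + 1) - C ((a (n + 1)) ^ 2) * P n)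
    (ha : Tendsto a atTop (nhds (1 / 2))) (hb : Tendsto b atTop (nhds 0))
    (φ : ℂ → ℂ)
    (hφdiff : DifferentiableOn ℂ φ segIccᶜ)
    (hφsq : ∀ z ∉ segIcc, (φ z - z) ^ 2 = z ^ 2 - 1)
    (hφpos : ∀ x : ℝ, 1 < x → φ (x : ℂ) = ((x + Real.sqrt (x ^ 2 - 1) : ℝ) : ℂ))
    (K : Set ℂ) (hK : IsCompact K) (hKsub : ∀ z ∈ K, z ∉ segIcc) :
    TendstoUniformlyOn
      (fun (n : ℕ) (z : ℂ) => aeval z (S n) / aeval z (P n))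
      (fun z : ℂ => ∏ j, (φ z - φ ((c j : ℝ) : ℂ)) ^ 2 / (2 * φ z * (z - ((c j : ℝ) : ℂ))))
      atTop K := by
  exact (tendstoLocallyUniformlyOn_iff_forall_isCompact isOpen_compl_segIcc).1
    (statement10_general μ hμinf c d hseq.injective hc η (fun j => (hη j).ne') S hSmonic hSdeg
      hSorth P a b hPmonic hPdeg hPorth hP1 hPrec ha hb φ hφdiff.continuousOn hφsq hφpos) K hKsub hK

end
end

section
/- Integral representation of the remainder: for every k ≥ 1 and every n, for all z ∈ ℂ ∖ [−1,1] with S_{n+k}(z) ≠ 0, μ̂_k(z) − R_n^{[k]}(z) = ∫_{−1}^{1} S_{n+k}(x) Q_{k−1}(x) / (S_{n+k}(z) (z − x)) dμ_ρ(x); moreover, if additionally S_{n−d+1}(z) ≠ 0 and n ≥ d, then μ̂_k(z) − R_n^{[k]}(z) = ∫_{−1}^{1} S_{n+k}(x) S_{n−d+1}(x) Q_{k−1}(x) / (S_{n+k}(z) S_{n−d+1}(z) (z − x)) dμ_ρ(x). -/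
open MeasureTheory Polynomial Filter
open scoped Classical

noncomputable section

/-!
The first identity holds for every polynomial `T` in place of `S_{n+k}`: splitting the difference
quotient shows that the associated function of `T` is `T(z)` times the Markov function of the
weight, minus the Markov function of the weight multiplied by `T`. For the second identity, apply
the same splitting to a second polynomial `p` and the weight multiplied by `T`: the associated
function now vanishes, because `(p(z) - p(x)) / (z - x)` is a polynomial in `x` of degree less than
`deg p`, and a multiple of `ρ` does not see the discrete part of the Sobolev product, so that
Sobolev orthogonality of `T` becomes orthogonality with respect to `ρ dμ`.
-/

section PolynomialLemmas

theorem linearMap_eq_zero_of_degree_lt {R M : Type*} [Semiring R] [AddCommMonoid M] [Module R M]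
    (φ : R[X] →ₗ[R] M) {n : ℕ} (hφ : ∀ m < n, φ (X ^ m) = 0) {f : R[X]} (hf : f.degree < n) :
    φ f = 0 := by
  suffices degreeLT R n ≤ LinearMap.ker φ from this (mem_degreeLT.2 hf)
  rw [degreeLT_eq_span_X_pow, Submodule.span_le]
  intro g hg
  obtain ⟨m, hm, rfl⟩ := Finset.mem_image.1 (Finset.mem_coe.1 hg)
  exact hφ m (Finset.mem_range.1 hm)

theorem eval_sub_eval_div_sub {K : Type*} [Field K] (p : K[X]) {z x : K} (hzx : z - x ≠ 0) :
    (p.eval z - p.eval x) / (z - x) = (p /ₘ (X - C z)).eval x := by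
  have division : p.eval z + (x - z) * (p /ₘ (X - C z)).eval x = p.eval x := by
    conv_rhs => rw [← modByMonic_add_div p (X - C z), modByMonic_X_sub_C_eq_C_eval]
    simp only [eval_add, eval_mul, eval_sub, eval_X, eval_C]
  rw [div_eq_iff hzx, ← division]
  ring

theorem integral_eval_mul_eq_zero {α 𝕜 : Type*} [MeasurableSpace α] [RCLike 𝕜] {ν : Measure α}
    {u f : α → 𝕜} {n : ℕ} (hint : ∀ i < n, Integrable (fun x => u x ^ i * f x) ν)
    (horth : ∀ i < n, ∫ x, u x ^ i * f x ∂ν = 0) {r : 𝕜[X]} (hr : r.degree < n) :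
    ∫ x, r.eval (u x) * f x ∂ν = 0 := by
  rcases eq_or_ne r 0 with rfl | hr0
  · simp
  have expand (x : α) :
      r.eval (u x) * f x = ∑ i ∈ Finset.range n, r.coeff i * (u x ^ i * f x) := by
    simp only [eval_eq_sum_range' ((natDegree_lt_iff_degree_lt hr0).2 hr), Finset.sum_mul,
      mul_assoc]
  simp_rw [expand]
  rw [integral_finsetSum _ fun i hi => (hint i (Finset.mem_range.1 hi)).const_mul _]
  refine Finset.sum_eq_zero fun i hi => ?_
  rw [integral_const_mul, horth i (Finset.mem_range.1 hi), mul_zero]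

end PolynomialLemmas

section MarkovFunction

variable (μ : Measure ℝ) (w q p : ℝ[X]) {z : ℂ}

theorem sub_ofReal_ne_zero_of_notMem_segIcc (hz : z ∉ segIcc) {x : ℝ}
    (hx : x ∈ Set.Icc (-1 : ℝ) 1) : z - (x : ℂ) ≠ 0 :=
  fun h => hz ⟨x, hx, (sub_eq_zero.1 h).symm⟩

theorem integrableOn_ofReal_eval_div_sub [IsFiniteMeasureOnCompacts μ] (hz : z ∉ segIcc) :
    IntegrableOn (fun x : ℝ => ((p.eval x : ℝ) : ℂ) / (z - (x : ℂ))) (Set.Icc (-1 : ℝ) 1) μ :=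
  ContinuousOn.integrableOn_compact isCompact_Icc <|
    ContinuousOn.div (by fun_prop) (by fun_prop)
      fun _ hx => sub_ofReal_ne_zero_of_notMem_segIcc hz hx

theorem markovHat_div (a : ℂ) :
    markovHat μ w q z / a =
      ∫ x in Set.Icc (-1 : ℝ) 1, ((q.eval x * w.eval x : ℝ) : ℂ) / (a * (z - (x : ℂ))) ∂μ := by
  rw [markovHat, ← integral_div]
  simp only [div_div, mul_comm a]

theorem assocFun_eq_aeval_mul_markovHat_sub [IsFiniteMeasureOnCompacts μ] (hz : z ∉ segIcc) :
    assocFun μ w q p z = aeval z p * markovHat μ w q z - markovHat μ w (p * q) z := by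
  have hint (r : ℝ[X]) : IntegrableOn
      (fun x : ℝ => ((r.eval x * w.eval x : ℝ) : ℂ) / (z - (x : ℂ))) (Set.Icc (-1 : ℝ) 1) μ := by
    simpa only [eval_mul] using integrableOn_ofReal_eval_div_sub μ (r * w) hz
  unfold assocFun markovHat
  rw [← integral_const_mul,
    ← integral_sub ((hint q).integrable.const_mul _) (hint (p * q)).integrable]
  congr 1 with x
  rw [eval_mul]
  push_cast
  ring

theorem markovHat_sub_assocFun_div [IsFiniteMeasureOnCompacts μ] (hz : z ∉ segIcc)
    (hp : aeval z p ≠ 0) :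
    markovHat μ w q z - assocFun μ w q p z / aeval z p =
      markovHat μ w (p * q) z / aeval z p := by
  rw [assocFun_eq_aeval_mul_markovHat_sub μ w q p hz]
  field_simp
  ring

theorem assocFun_eq_zero [IsFiniteMeasureOnCompacts μ] (hz : z ∉ segIcc)
    (horth : ∀ i < p.natDegree,
      ∫ x in Set.Icc (-1 : ℝ) 1, x ^ i * (q.eval x * w.eval x) ∂μ = 0) :
    assocFun μ w q p z = 0 := by
  rcases eq_or_ne p 0 with rfl | hp
  · simp [assocFun]
  set P : ℂ[X] := p.map (algebraMap ℝ ℂ) with hP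
  have quotient_degree : (P /ₘ (X - C z)).degree < p.natDegree :=
    (degree_divByMonic_lt P (X - C z) (map_ne_zero hp) (by simp)).trans_eq
      (by rw [hP, degree_map, degree_eq_natDegree hp])
  have quotient_eval {x : ℝ} (hx : x ∈ Set.Icc (-1 : ℝ) 1) :
      (aeval z p - ((p.eval x : ℝ) : ℂ)) / (z - (x : ℂ)) = (P /ₘ (X - C z)).eval (x : ℂ) := by
    rw [← eval_sub_eval_div_sub P (sub_ofReal_ne_zero_of_notMem_segIcc hz hx), hP,
      eval_map_algebraMap, ← Complex.coe_algebraMap, eval_map_apply]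
  have moment_integrable (i : ℕ) (_ : i < p.natDegree) : IntegrableOn
      (fun x : ℝ => (x : ℂ) ^ i * ((q.eval x * w.eval x : ℝ) : ℂ)) (Set.Icc (-1 : ℝ) 1) μ :=
    ContinuousOn.integrableOn_compact isCompact_Icc (by fun_prop)
  have moment_eq_zero (i : ℕ) (hi : i < p.natDegree) :
      ∫ x in Set.Icc (-1 : ℝ) 1, (x : ℂ) ^ i * ((q.eval x * w.eval x : ℝ) : ℂ) ∂μ = 0 := by
    simp only [← Complex.ofReal_pow, ← Complex.ofReal_mul]
    rw [integral_complex_ofReal, horth i hi, Complex.ofReal_zero]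
  calc assocFun μ w q p z
    _ = ∫ x in Set.Icc (-1 : ℝ) 1,
          (P /ₘ (X - C z)).eval (x : ℂ) * ((q.eval x * w.eval x : ℝ) : ℂ) ∂μ :=
        setIntegral_congr_fun measurableSet_Icc fun x hx => by simp only [quotient_eval hx]
    _ = 0 := integral_eval_mul_eq_zero moment_integrable moment_eq_zero quotient_degree

end MarkovFunction

section SobolevOrthogonality

variable (μ : Measure ℝ) {N : ℕ} (c : Fin N → ℝ) (d : Fin N → ℕ) (η : Fin N → ℕ → ℝ)

/-- The discrete Sobolev inner product as a linear functional of its first argument. -/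
def sobFunctional [IsFiniteMeasureOnCompacts μ] (h : ℝ[X]) : ℝ[X] →ₗ[ℝ] ℝ where
  toFun f := sobInner2 μ c d η f h
  map_add' f g := by
    have hint (p : ℝ[X]) : Integrable (fun x => p.eval x * h.eval x)
        (μ.restrict (Set.Icc (-1 : ℝ) 1)) :=
      ContinuousOn.integrableOn_compact isCompact_Icc (by fun_prop)
    simp only [sobInner2, iterate_map_add, eval_add, mul_add, add_mul, Finset.sum_add_distrib,
      integral_add (hint f) (hint g)]
    ring
  map_smul' a f := by
    simp only [sobInner2, iterate_derivative_smul, eval_smul, smul_eq_mul, mul_assoc,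
      integral_const_mul, mul_left_comm _ a, ← Finset.mul_sum, ← mul_add, RingHom.id_apply]

theorem sobInner2_eq_zero_of_degree_lt [IsFiniteMeasureOnCompacts μ] {h : ℝ[X]} {n : ℕ}
    (horth : ∀ m < n, sobInner2 μ c d η (X ^ m) h = 0) {f : ℝ[X]} (hf : f.degree < n) :
    sobInner2 μ c d η f h = 0 :=
  linearMap_eq_zero_of_degree_lt (sobFunctional μ c d η h) horth hf

variable {c} in
theorem X_sub_C_pow_dvd_rhoPoly {j : Fin N} (hcj : c j ∉ Set.Icc (-1 : ℝ) 1) :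
    (X - C (c j)) ^ (d j + 1) ∣ rhoPoly c d := by
  rcases lt_or_ge (c j) (-1) with hlt | hge
  · exact (Finset.dvd_prod_of_mem (fun i => (X - C (c i)) ^ (d i + 1))
      (by simp [hlt])).mul_right _
  · have hgt : 1 < c j := not_le.1 fun hle => hcj ⟨hge, hle⟩
    have factor_dvd : (X - C (c j)) ^ (d j + 1) ∣ (C (c j) - X) ^ (d j + 1) :=
      pow_dvd_pow_of_dvd ((dvd_sub_comm).1 dvd_rfl) _
    exact (factor_dvd.trans (Finset.dvd_prod_of_mem (fun i => (C (c i) - X) ^ (d i + 1))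
      (by simp [hgt]))).mul_left _

theorem natDegree_rhoPoly_le : (rhoPoly c d).natDegree ≤ N + ∑ j, d j := by
  have left_le (j : Fin N) : ((X - C (c j)) ^ (d j + 1)).natDegree ≤ d j + 1 := by
    simp
  have right_le (j : Fin N) : ((C (c j) - X) ^ (d j + 1)).natDegree ≤ d j + 1 := by
    simp [natDegree_sub (p := C (c j))]
  have hdisj : Disjoint (Finset.univ.filter fun j => c j < -1)
      (Finset.univ.filter fun j => 1 < c j) :=
    Finset.disjoint_filter.2 fun j _ hlt hgt => by linarith
  calc (rhoPoly c d).natDegree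
    _ ≤ ∑ j with c j < -1, (d j + 1) + ∑ j with 1 < c j, (d j + 1) :=
        natDegree_mul_le.trans <| add_le_add
          ((natDegree_prod_le _ _).trans (Finset.sum_le_sum fun j _ => left_le j))
          ((natDegree_prod_le _ _).trans (Finset.sum_le_sum fun j _ => right_le j))
    _ ≤ ∑ j, (d j + 1) := by
        rw [← Finset.sum_union hdisj]
        exact Finset.sum_le_sum_of_subset (Finset.subset_univ _)
    _ = N + ∑ j, d j := by simp [Finset.sum_add_distrib, add_comm]

variable {c d}

theorem eval_iterate_derivative_eq_zero_of_rhoPoly_dvd {f : ℝ[X]} (hf : rhoPoly c d ∣ f)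
    {j : Fin N} (hcj : c j ∉ Set.Icc (-1 : ℝ) 1) {i : ℕ} (hi : i ≤ d j) :
    (derivative^[i] f).eval (c j) = 0 := by
  have hpow := pow_sub_dvd_iterate_derivative_of_pow_dvd i
    ((X_sub_C_pow_dvd_rhoPoly d hcj).trans hf)
  exact dvd_iff_isRoot.1 ((dvd_pow_self _ (by omega)).trans hpow)

theorem sobInner2_eq_integral_of_rhoPoly_dvd (hc : ∀ j, c j ∉ Set.Icc (-1 : ℝ) 1) {f : ℝ[X]}
    (hf : rhoPoly c d ∣ f) (h : ℝ[X]) :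
    sobInner2 μ c d η f h = ∫ x in Set.Icc (-1 : ℝ) 1, f.eval x * h.eval x ∂μ := by
  refine add_eq_left.2 (Finset.sum_eq_zero fun j _ => Finset.sum_eq_zero fun i hi => ?_)
  rw [eval_iterate_derivative_eq_zero_of_rhoPoly_dvd hf (hc j)
    (Nat.lt_succ_iff.1 (Finset.mem_range.1 hi)), mul_zero, zero_mul]

theorem integral_mul_rhoPoly_mul_eq_zero [IsFiniteMeasureOnCompacts μ]
    (hc : ∀ j, c j ∉ Set.Icc (-1 : ℝ) 1) {h : ℝ[X]} {n : ℕ}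
    (horth : ∀ m < n, sobInner2 μ c d η (X ^ m) h = 0) {q : ℝ[X]}
    (hq : q.natDegree + (N + ∑ j, d j) < n) :
    ∫ x in Set.Icc (-1 : ℝ) 1, (q * rhoPoly c d).eval x * h.eval x ∂μ = 0 := by
  have hdeg : (q * rhoPoly c d).natDegree < n :=
    (natDegree_mul_le_of_le le_rfl (natDegree_rhoPoly_le c d)).trans_lt hq
  rw [← sobInner2_eq_integral_of_rhoPoly_dvd μ η hc (dvd_mul_left _ q)]
  exact sobInner2_eq_zero_of_degree_lt μ c d η horth
    (degree_le_natDegree.trans_lt (Nat.cast_lt.2 hdeg))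

theorem assocFun_rhoPoly_mul_eq_zero [IsFiniteMeasureOnCompacts μ]
    (hc : ∀ j, c j ∉ Set.Icc (-1 : ℝ) 1) {T : ℝ[X]} {n : ℕ}
    (horth : ∀ m < n, sobInner2 μ c d η (X ^ m) T = 0) {p q : ℝ[X]}
    (hdeg : p.natDegree + q.natDegree + (N + ∑ j, d j) ≤ n) {z : ℂ} (hz : z ∉ segIcc) :
    assocFun μ (rhoPoly c d) (T * q) p z = 0 := by
  refine assocFun_eq_zero μ _ _ _ hz fun i hi => ?_
  have hXq : (X ^ i * q).natDegree + (N + ∑ j, d j) < n := by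
    have := natDegree_mul_le_of_le (natDegree_X_pow_le (R := ℝ) i) (le_refl q.natDegree)
    omega
  rw [← integral_mul_rhoPoly_mul_eq_zero μ η hc horth hXq]
  congr 1 with x
  simp only [eval_mul, eval_pow, eval_X]
  ring

end SobolevOrthogonality

theorem statement16_general (μ : Measure ℝ) [IsFiniteMeasureOnCompacts μ] {N : ℕ} (c : Fin N → ℝ)
    (d : Fin N → ℕ) (hc : ∀ j, c j ∉ Set.Icc (-1 : ℝ) 1) (η : Fin N → ℕ → ℝ) {T : ℝ[X]} {n : ℕ}
    (horth : ∀ m < n, sobInner2 μ c d η (X ^ m) T = 0) (q : ℝ[X]) {z : ℂ} (hz : z ∉ segIcc)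
    (hTz : aeval z T ≠ 0) :
    (markovHat μ (rhoPoly c d) q z - assocFun μ (rhoPoly c d) q T z / aeval z T =
      ∫ x in Set.Icc (-1 : ℝ) 1, ((T.eval x * q.eval x * (rhoPoly c d).eval x : ℝ) : ℂ) /
        (aeval z T * (z - (x : ℂ))) ∂μ) ∧
    ∀ p : ℝ[X], p.natDegree + q.natDegree + (N + ∑ j, d j) ≤ n → aeval z p ≠ 0 →
      markovHat μ (rhoPoly c d) q z - assocFun μ (rhoPoly c d) q T z / aeval z T =
        ∫ x in Set.Icc (-1 : ℝ) 1,
          ((T.eval x * p.eval x * q.eval x * (rhoPoly c d).eval x : ℝ) : ℂ) /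
            (aeval z T * aeval z p * (z - (x : ℂ))) ∂μ := by
  rw [markovHat_sub_assocFun_div μ _ q T hz hTz]
  refine ⟨by simp only [markovHat_div, eval_mul], fun p hdeg hpz => ?_⟩
  have insert_p : markovHat μ (rhoPoly c d) (T * q) z =
      markovHat μ (rhoPoly c d) (p * (T * q)) z / aeval z p := by
    rw [← markovHat_sub_assocFun_div μ _ (T * q) p hz hpz,
      assocFun_rhoPoly_mul_eq_zero μ η hc horth hdeg hz, zero_div, sub_zero]
  rw [insert_p, div_div, mul_comm (aeval z p), markovHat_div]
  simp only [eval_mul, mul_left_comm (p.eval _), mul_assoc]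

/-- Integral representation of the remainder `μ̂_k - R_n^{[k]}`. -/
theorem statement16
    (μ : Measure ℝ) [IsFiniteMeasure μ]
    (hμsupp : μ (Set.Icc (-1:ℝ) 1)ᶜ = 0)
    (hμinf : ∀ p : Polynomial ℝ, p ≠ 0 → 0 < ∫ x in Set.Icc (-1:ℝ) 1, (p.eval x) ^ 2 ∂μ)
    {N : ℕ} (c : Fin N → ℝ) (d : Fin N → ℕ)
    (hc : ∀ j, c j ∉ Set.Icc (-1:ℝ) 1)
    (η : Fin N → ℕ → ℝ) (hη : ∀ j i, i ≤ d j → 0 ≤ η j i) (hηd : ∀ j, 0 < η j (d j))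
    (S : ℕ → Polynomial ℝ)
    (hSmonic : ∀ n, (S n).Monic) (hSdeg : ∀ n, (S n).natDegree = n)
    (hSorth : ∀ n, ∀ m < n, sobInner2 μ c d η (X ^ m) (S n) = 0)
    (Q : ℕ → Polynomial ℝ)
    (hQmonic : ∀ n, (Q n).Monic) (hQdeg : ∀ n, (Q n).natDegree = n)
    (hQorth : ∀ n, ∀ m < n,
      (∫ x in Set.Icc (-1:ℝ) 1, x ^ m * (Q n).eval x * (rhoPoly c d).eval x ∂μ) = 0)
    (k n : ℕ) (hk : 1 ≤ k) (z : ℂ) (hz : z ∉ segIcc)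
    (hz1 : aeval z (S (n + k)) ≠ 0) :
    (markovHat μ (rhoPoly c d) (Q (k - 1)) z -
        assocFun μ (rhoPoly c d) (Q (k - 1)) (S (n + k)) z / aeval z (S (n + k)) =
      ∫ x in Set.Icc (-1:ℝ) 1,
        (((S (n + k)).eval x * (Q (k - 1)).eval x * (rhoPoly c d).eval x : ℝ) : ℂ) /
          (aeval z (S (n + k)) * (z - (x : ℂ))) ∂μ) ∧
    (N + ∑ j, d j ≤ n → aeval z (S (n - (N + ∑ j, d j) + 1)) ≠ 0 →
      markovHat μ (rhoPoly c d) (Q (k - 1)) z -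
          assocFun μ (rhoPoly c d) (Q (k - 1)) (S (n + k)) z / aeval z (S (n + k)) =
        ∫ x in Set.Icc (-1:ℝ) 1,
          (((S (n + k)).eval x * (S (n - (N + ∑ j, d j) + 1)).eval x *
              (Q (k - 1)).eval x * (rhoPoly c d).eval x : ℝ) : ℂ) /
            (aeval z (S (n + k)) * aeval z (S (n - (N + ∑ j, d j) + 1)) *
              (z - (x : ℂ))) ∂μ) := by
  exact (statement16_general μ c d hc η (hSorth (n + k)) (Q (k - 1)) hz hz1).imp_right
    fun remainder hn => remainder _ (by rw [hSdeg, hQdeg]; omega)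

end
end
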